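/- arXiv:2302.07841 — 3 statements merged into one kernel-verified Lean document; each statement's English description precedes it below -/
import Mathlib

section
/- Let ρ be an n-qudit state that is not a minimal stabilizer-projection state. Let R_P(ρ) = |{(p⃗,q⃗) ∈ V^n : Ξ_ρ(p⃗,q⃗) ≠ 0}| (the Pauli rank of ρ) and let K = |{(p⃗,q⃗) ∈ V^n : |Ξ_ρ(p⃗,q⃗)| = 1}|. Then 0 ≤ MG(ρ) ≤ 1 − sqrt( (d^n Tr[ρ²] − K) / (R_P(ρ) − K) ). -/
open scoped BigOperators ComplexOrder Classical ENNReal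
open Matrix

namespace PaperQI

/-- The computational-basis index set `ℤ_d^n` for an `n`-qudit system. -/
abbrev QV (d n : ℕ) := Fin n → ZMod d

/-- Matrices (linear operators) on the `n`-qudit Hilbert space `(ℂ^d)^{⊗ n}`,
written in the computational basis indexed by `ℤ_d^n`. -/
abbrev Mat (d n : ℕ) := Matrix (QV d n) (QV d n) ℂ

/-- The character `ξ^z = exp(2πi z/d)` for `z ∈ ℤ_d`. -/
noncomputable def ch (d : ℕ) (z : ZMod d) : ℂ :=
  Complex.exp (2 * Real.pi * Complex.I * (z.val : ℂ) / (d : ℂ))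

/-- Dot product on `ℤ_d^n`. -/
def qdot {d n : ℕ} (p k : QV d n) : ZMod d := ∑ i, p i * k i

/-- The `n`-qudit Weyl operator `w(p,q) = ⊗_i ξ^{-2⁻¹ p_i q_i} Z^{p_i} X^{q_i}`
(for odd prime `d`).  Its matrix entries are
`w(p,q)[k+q, k] = ξ^{p·k + 2⁻¹ p·q}`. -/
noncomputable def weyl (d n : ℕ) [Fact (Nat.Prime d)] (p q : QV d n) : Mat d n :=
  Matrix.of fun k' k =>
    if k' = k + q then ch d (qdot p k + (2 : ZMod d)⁻¹ * qdot p q) else 0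

/-- `ρ` is an `n`-qudit state: positive semidefinite with trace one. -/
def IsState (d n : ℕ) [Fact (Nat.Prime d)] (ρ : Mat d n) : Prop :=
  ρ.PosSemidef ∧ ρ.trace = 1

/-- The characteristic function `Ξ_ρ(p,q) = Tr[ρ w(-p,-q)]`. -/
noncomputable def xi (d n : ℕ) [Fact (Nat.Prime d)] (ρ : Mat d n)
    (pq : QV d n × QV d n) : ℂ :=
  (ρ * weyl d n (-pq.1) (-pq.2)).trace

/-- The mean state `M(ρ) = d^{-n} ∑_{|Ξ_ρ(p,q)| = 1} Ξ_ρ(p,q) w(p,q)`. -/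
noncomputable def meanState (d n : ℕ) [Fact (Nat.Prime d)] (ρ : Mat d n) : Mat d n :=
  ((d : ℂ) ^ n)⁻¹ •
    ∑ pq : QV d n × QV d n,
      if ‖xi d n ρ pq‖ = 1 then xi d n ρ pq • weyl d n pq.1 pq.2 else 0

/-- `ρ` is a minimal stabilizer-projection state (MSPS): for some `r ≤ n` there are
mutually commuting Weyl operators `w(p_i,q_i)`, `i = 1,…,r`, whose labels generate a
subgroup of `V^n` of order `d^r`, and phases `x ∈ ℤ_d^r`, such that
`ρ = d^{-(n-r)} ∏_i ( (1/d) ∑_{k ∈ ℤ_d} (ξ^{x_i} w(p_i,q_i))^k )`. -/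
noncomputable def IsMSPS (d n : ℕ) [Fact (Nat.Prime d)] (ρ : Mat d n) : Prop :=
  ∃ r : ℕ, r ≤ n ∧
    ∃ (p q : Fin r → QV d n) (x : Fin r → ZMod d),
      (∀ i j, Commute (weyl d n (p i) (q i)) (weyl d n (p j) (q j))) ∧
      Nat.card (AddSubgroup.closure (Set.range fun i => (p i, q i)) :
        AddSubgroup (QV d n × QV d n)) = d ^ r ∧
      ρ = ((d : ℂ) ^ (n - r))⁻¹ •
        (List.ofFn fun i =>
          (d : ℂ)⁻¹ • ∑ k : ZMod d, (ch d (x i) • weyl d n (p i) (q i)) ^ k.val).prod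

/-- The magic gap `MG(ρ) = 1 - max{|Ξ_ρ(p,q)| : Ξ_ρ(p,q) ≠ 0, |Ξ_ρ(p,q)| ≠ 1}`,
and `MG(ρ) = 0` if this set is empty. -/
noncomputable def magicGap (d n : ℕ) [Fact (Nat.Prime d)] (ρ : Mat d n) : ℝ :=
  let s : Finset ℝ :=
    (Finset.univ.filter fun pq : QV d n × QV d n =>
      xi d n ρ pq ≠ 0 ∧ ‖xi d n ρ pq‖ ≠ 1).image
      fun pq => ‖xi d n ρ pq‖
  if h : s.Nonempty then 1 - s.max' h else 0

/-- Von Neumann entropy `H(ρ) = -∑ λ_i log λ_i` (natural log, eigenvalues of `ρ`),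
with the convention `0 log 0 = 0`; junk value `0` on non-Hermitian matrices. -/
noncomputable def vnEnt {d n : ℕ} [Fact (Nat.Prime d)] (ρ : Mat d n) : ℝ :=
  if h : ρ.IsHermitian then -∑ i, h.eigenvalues i * Real.log (h.eigenvalues i) else 0

/-- Rényi entropy `H_α` for `α ∈ [0,∞]`:  `H_0 = log rank`, `H_1 = H` (von Neumann),
`H_∞ = -log λ_max`, and `H_α = (1-α)⁻¹ log ∑ λ_i^α` otherwise. -/
noncomputable def renyiEnt {d n : ℕ} [Fact (Nat.Prime d)] (α : ℝ≥0∞) (ρ : Mat d n) : ℝ :=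
  if h : ρ.IsHermitian then
    if α = 0 then Real.log (ρ.rank : ℝ)
    else if α = 1 then -∑ i, h.eigenvalues i * Real.log (h.eigenvalues i)
    else if α = ⊤ then -Real.log (⨆ i, h.eigenvalues i)
    else (1 - α.toReal)⁻¹ * Real.log (∑ i, h.eigenvalues i ^ α.toReal)
  else 0

/-- Matrix logarithm on the support: `log ρ = U diag(log λ_i) U†` via the spectral
decomposition, with `log 0 = 0` on the kernel; junk value `0` off Hermitian matrices. -/
noncomputable def matLog {d n : ℕ} [Fact (Nat.Prime d)] (ρ : Mat d n) : Mat d n :=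
  if h : ρ.IsHermitian then
    (h.eigenvectorUnitary : Mat d n) *
      Matrix.diagonal (fun i => (Real.log (h.eigenvalues i) : ℂ)) *
      star (h.eigenvectorUnitary : Mat d n)
  else 0

/-- Matrix real power on the support: `ρ^t = U diag(λ_i^t) U†`, with `0^t = 0` on the
kernel (for `t ≠ 0`); junk value `0` off Hermitian matrices. -/
noncomputable def matRpow {d n : ℕ} [Fact (Nat.Prime d)] (ρ : Mat d n) (t : ℝ) : Mat d n :=
  if h : ρ.IsHermitian then
    (h.eigenvectorUnitary : Mat d n) *
      Matrix.diagonal (fun i => ((h.eigenvalues i ^ t : ℝ) : ℂ)) *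
      star (h.eigenvectorUnitary : Mat d n)
  else 0

/-- Support inclusion `supp ρ ⊆ supp σ`, expressed as `ker σ ⊆ ker ρ`
(the correct notion for positive semidefinite matrices). -/
def suppLE {d n : ℕ} [Fact (Nat.Prime d)] (ρ σ : Mat d n) : Prop :=
  ∀ v : QV d n → ℂ, σ.mulVec v = 0 → ρ.mulVec v = 0

/-- Relative entropy `D(ρ‖σ) = Tr[ρ(log ρ - log σ)]` when `supp ρ ⊆ supp σ`, else `+∞`. -/
noncomputable def relEnt {d n : ℕ} [Fact (Nat.Prime d)] (ρ σ : Mat d n) : EReal :=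
  if suppLE ρ σ then (((ρ * (matLog ρ - matLog σ)).trace.re : ℝ) : EReal) else ⊤

/-- Sandwiched Rényi relative entropy
`D_α(ρ‖σ) = (α-1)⁻¹ log Tr[(σ^{(1-α)/(2α)} ρ σ^{(1-α)/(2α)})^α]` for `α ≠ 1`
(with `+∞` when `supp ρ ⊄ supp σ`), and `D_1 = D` the relative entropy. -/
noncomputable def sandRenyi {d n : ℕ} [Fact (Nat.Prime d)] (α : ℝ) (ρ σ : Mat d n) :
    EReal :=
  if α = 1 then relEnt ρ σ
  else if suppLE ρ σ then
    let x : ℝ := (α - 1)⁻¹ * Real.log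
      ((matRpow (matRpow σ ((1 - α) / (2 * α)) * ρ * matRpow σ ((1 - α) / (2 * α)))
        α).trace.re)
    (x : EReal)
  else ⊤

/-- The key unitary `U|i,j⟩ = |N g₁₁ i - N g₁₀ j, -N g₀₁ i + N g₀₀ j⟩`,
where `N = (det G)⁻¹` in `ℤ_d`. -/
noncomputable def convU (d n : ℕ) [Fact (Nat.Prime d)] (g00 g01 g10 g11 : ZMod d) :
    Matrix (QV d n × QV d n) (QV d n × QV d n) ℂ :=
  Matrix.of fun kl ij =>
    if kl = ((fun a => (g00 * g11 - g01 * g10)⁻¹ * g11 * ij.1 a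
                      - (g00 * g11 - g01 * g10)⁻¹ * g10 * ij.2 a : QV d n),
             (fun a => -((g00 * g11 - g01 * g10)⁻¹ * g01) * ij.1 a
                      + (g00 * g11 - g01 * g10)⁻¹ * g00 * ij.2 a : QV d n))
    then 1 else 0

/-- Tensor (Kronecker) product of two `n`-qudit operators, on the doubled system. -/
def kron {d n : ℕ} (ρ σ : Mat d n) : Matrix (QV d n × QV d n) (QV d n × QV d n) ℂ :=
  Matrix.of fun ij kl => ρ ij.1 kl.1 * σ ij.2 kl.2

/-- Partial trace over the second `n`-qudit factor. -/
noncomputable def ptrB {d n : ℕ} [Fact (Nat.Prime d)]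
    (M : Matrix (QV d n × QV d n) (QV d n × QV d n) ℂ) : Mat d n :=
  Matrix.of fun i i' => ∑ j : QV d n, M (i, j) (i', j)

/-- The convolution `ρ ⊠ σ = Tr_B[U (ρ ⊗ σ) U†]` with parameter matrix
`G = [g₀₀, g₀₁; g₁₀, g₁₁]`. -/
noncomputable def conv (d n : ℕ) [Fact (Nat.Prime d)] (g00 g01 g10 g11 : ZMod d)
    (ρ σ : Mat d n) : Mat d n :=
  ptrB (convU d n g00 g01 g10 g11 * kron ρ σ * (convU d n g00 g01 g10 g11)ᴴ)

/-- The beam-splitter unitary `U_{s,t}|i,j⟩ = |s i + t j, t i - s j⟩`. -/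
noncomputable def bsU (d n : ℕ) [Fact (Nat.Prime d)] (s t : ZMod d) :
    Matrix (QV d n × QV d n) (QV d n × QV d n) ℂ :=
  Matrix.of fun kl ij =>
    if kl = ((fun a => s * ij.1 a + t * ij.2 a : QV d n),
             (fun a => t * ij.1 a - s * ij.2 a : QV d n))
    then 1 else 0

/-- The beam-splitter convolution `ρ ⊠_{s,t} σ = Tr_B[U_{s,t} (ρ ⊗ σ) U_{s,t}†]`. -/
noncomputable def bsConv (d n : ℕ) [Fact (Nat.Prime d)] (s t : ZMod d)
    (ρ σ : Mat d n) : Mat d n :=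
  ptrB (bsU d n s t * kron ρ σ * (bsU d n s t)ᴴ)

/-- Iterated self-convolution: `⊠^0 ρ = ρ` and `⊠^{N+1} ρ = (⊠^N ρ) ⊠ ρ`. -/
noncomputable def bsIter (d n : ℕ) [Fact (Nat.Prime d)] (s t : ZMod d) :
    ℕ → Mat d n → Mat d n
  | 0, ρ => ρ
  | N + 1, ρ => bsConv d n s t (bsIter d n s t N ρ) ρ

/-- `ρ` is the pure stabilizer state `|ψ⟩⟨ψ|` with stabilizer label group `S ⊆ V^n`:
`S` has order `d^n` and `ψ` is a common eigenvector of all `w(p,q)`, `(p,q) ∈ S`. -/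
noncomputable def IsPureStabilizerWithGroup (d n : ℕ) [Fact (Nat.Prime d)]
    (ρ : Mat d n) (S : AddSubgroup (QV d n × QV d n)) : Prop :=
  Nat.card S = d ^ n ∧
    ∃ ψ : QV d n → ℂ, ψ ≠ 0 ∧
      ρ = Matrix.of (fun a b => ψ a * starRingEnd ℂ (ψ b)) ∧
      ∀ pq ∈ S, ∃ c : ℂ, (weyl d n pq.1 pq.2).mulVec ψ = c • ψ

/-- `ρ` is a pure stabilizer state. -/
noncomputable def IsPureStabilizer (d n : ℕ) [Fact (Nat.Prime d)] (ρ : Mat d n) : Prop :=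
  ∃ S : AddSubgroup (QV d n × QV d n), IsPureStabilizerWithGroup d n ρ S

/-- `ρ` is a stabilizer state: a convex combination of pure stabilizer states. -/
noncomputable def IsStabilizerState (d n : ℕ) [Fact (Nat.Prime d)] (ρ : Mat d n) : Prop :=
  ∃ (m : ℕ) (p : Fin m → ℝ) (τ : Fin m → Mat d n),
    (∀ i, 0 ≤ p i) ∧ ∑ i, p i = 1 ∧ (∀ i, IsPureStabilizer d n (τ i)) ∧
    ρ = ∑ i, (p i : ℂ) • τ i

/-- `U` is a Clifford unitary: a unitary mapping each Weyl operator, under conjugation,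
to a complex phase times a Weyl operator. -/
noncomputable def IsClifford (d n : ℕ) [Fact (Nat.Prime d)] (U : Mat d n) : Prop :=
  U ∈ Matrix.unitaryGroup (QV d n) ℂ ∧
    ∀ pq : QV d n × QV d n, ∃ (c : ℂ) (pq' : QV d n × QV d n),
      ‖c‖ = 1 ∧ U * weyl d n pq.1 pq.2 * Uᴴ = c • weyl d n pq'.1 pq'.2

/-- The divergence-based quantum Fisher information `J(ρ; H) = Tr[ρ [H,[H, log ρ]]]`. -/
noncomputable def fisherJ {d n : ℕ} [Fact (Nat.Prime d)] (ρ H : Mat d n) : ℝ :=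
  (ρ * (H * (H * matLog ρ - matLog ρ * H) - (H * matLog ρ - matLog ρ * H) * H)).trace.re

/-- Embed a single-qudit operator at site `k` of an `n`-qudit system
(tensored with the identity elsewhere). -/
noncomputable def embedAt (d n : ℕ) (k : Fin n) (M : Matrix (ZMod d) (ZMod d) ℂ) :
    Mat d n :=
  Matrix.of fun v w => if ∀ i, i ≠ k → v i = w i then M (v k) (w k) else 0

/-- The rank-one projection `H_j^Z = |j⟩⟨j|` onto the eigenvector of `Z`
with eigenvalue `ξ^j`. -/
noncomputable def projZ (d : ℕ) (j : ZMod d) : Matrix (ZMod d) (ZMod d) ℂ :=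
  Matrix.of fun a b => if a = j ∧ b = j then 1 else 0

/-- The rank-one projection `H_j^X` onto the eigenvector of `X` with eigenvalue `ξ^j`;
its entries are `(H_j^X)_{a b} = d⁻¹ ξ^{j(b-a)}`. -/
noncomputable def projX (d : ℕ) (j : ZMod d) : Matrix (ZMod d) (ZMod d) ℂ :=
  Matrix.of fun a b => (d : ℂ)⁻¹ * ch d (j * (b - a))

/-- Total Fisher information
`J(ρ) = ∑_{k=1}^n ∑_{j ∈ ℤ_d} J(ρ; H_j^{X_k}) + J(ρ; H_j^{Z_k})`. -/
noncomputable def fisherTotal (d n : ℕ) [Fact (Nat.Prime d)] (ρ : Mat d n) : ℝ :=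
  ∑ k : Fin n, ∑ j : ZMod d,
    (fisherJ ρ (embedAt d n k (projX d j)) + fisherJ ρ (embedAt d n k (projZ d j)))

/-- Holevo capacity of a channel `E`:
`χ(E) = sup H(∑ p_i E(ρ_i)) - ∑ p_i H(E(ρ_i))` over finite ensembles of states. -/
noncomputable def holevoCap (d n : ℕ) [Fact (Nat.Prime d)] (E : Mat d n → Mat d n) : ℝ :=
  ⨆ m : ℕ, ⨆ p : Fin m → ℝ, ⨆ ρs : Fin m → Mat d n,
    ⨆ _ : (∀ i, 0 ≤ p i) ∧ ∑ i, p i = 1 ∧ ∀ i, IsState d n (ρs i),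
      (vnEnt (∑ i, (p i : ℂ) • E (ρs i)) - ∑ i, p i * vnEnt (E (ρs i)))

/-- Hilbert–Schmidt norm `‖A‖₂ = (Tr[A†A])^{1/2}`. -/
noncomputable def hsNorm {d n : ℕ} [Fact (Nat.Prime d)] (A : Mat d n) : ℝ :=
  Real.sqrt ((Aᴴ * A).trace.re)

/-- Trace norm `‖A‖₁ = Tr[(A†A)^{1/2}]`. -/
noncomputable def trNorm {d n : ℕ} [Fact (Nat.Prime d)] (A : Mat d n) : ℝ :=
  (matRpow (Aᴴ * A) (2⁻¹ : ℝ)).trace.re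

/-- Tensor product of an `n₁`-qudit operator with an `n₂`-qudit operator,
as an `(n₁+n₂)`-qudit operator. -/
def tensorMat (d n₁ n₂ : ℕ) (ρ₁ : Mat d n₁) (ρ₂ : Mat d n₂) : Mat d (n₁ + n₂) :=
  Matrix.of fun v w =>
    ρ₁ (fun i => v (Fin.castAdd n₂ i)) (fun i => w (Fin.castAdd n₂ i)) *
    ρ₂ (fun j => v (Fin.natAdd n₁ j)) (fun j => w (Fin.natAdd n₁ j))

/-! ### Qubit (`d = 2`) specific definitions -/

/-- The `n`-qubit Weyl (Pauli) operator `w(p,q) = ⊗_i i^{-p_i q_i} Z^{p_i} X^{q_i}`. -/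
noncomputable def weyl2 (n : ℕ) (p q : Fin n → ZMod 2) :
    Matrix (Fin n → ZMod 2) (Fin n → ZMod 2) ℂ :=
  Matrix.of fun k' k =>
    if k' = k + q then
      ∏ i, ((-Complex.I) ^ ((p i).val * (q i).val) *
        (-1 : ℂ) ^ ((p i * (k i + q i)).val))
    else 0

/-- The `n`-qubit characteristic function `Ξ_ρ(p,q) = Tr[ρ w(p,q)†]`. -/
noncomputable def xi2 (n : ℕ) (ρ : Matrix (Fin n → ZMod 2) (Fin n → ZMod 2) ℂ)
    (pq : (Fin n → ZMod 2) × (Fin n → ZMod 2)) : ℂ :=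
  (ρ * (weyl2 n pq.1 pq.2)ᴴ).trace

/-- The logarithmic magic gap
`LMG(ρ) = -log₂ max{|Ξ_ρ(p,q)| : Ξ_ρ(p,q) ≠ 0, |Ξ_ρ(p,q)| ≠ 1}` (`0` if the set is
empty). -/
noncomputable def lmg (n : ℕ) (ρ : Matrix (Fin n → ZMod 2) (Fin n → ZMod 2) ℂ) : ℝ :=
  let s : Finset ℝ :=
    (Finset.univ.filter fun pq : (Fin n → ZMod 2) × (Fin n → ZMod 2) =>
      xi2 n ρ pq ≠ 0 ∧ ‖xi2 n ρ pq‖ ≠ 1).image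
      fun pq => ‖xi2 n ρ pq‖
  if h : s.Nonempty then -Real.logb 2 (s.max' h) else 0

/-- `U` is an `n`-qubit Clifford unitary. -/
noncomputable def IsClifford2 (n : ℕ) (U : Matrix (Fin n → ZMod 2) (Fin n → ZMod 2) ℂ) :
    Prop :=
  U ∈ Matrix.unitaryGroup (Fin n → ZMod 2) ℂ ∧
    ∀ pq : (Fin n → ZMod 2) × (Fin n → ZMod 2),
      ∃ (c : ℂ) (pq' : (Fin n → ZMod 2) × (Fin n → ZMod 2)),
        ‖c‖ = 1 ∧ U * weyl2 n pq.1 pq.2 * Uᴴ = c • weyl2 n pq'.1 pq'.2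

/-- The T gate `diag(1, e^{iπ/4})` acting on qubit `k` of an `n`-qubit system. -/
noncomputable def tGateAt (n : ℕ) (k : Fin n) :
    Matrix (Fin n → ZMod 2) (Fin n → ZMod 2) ℂ :=
  embedAt 2 n k (Matrix.of fun a b =>
    if a = b then (if a = 0 then 1 else Complex.exp (Real.pi * Complex.I / 4)) else 0)

/-- An `n`-qubit state: positive semidefinite with trace one. -/
def IsState2 (n : ℕ) (ρ : Matrix (Fin n → ZMod 2) (Fin n → ZMod 2) ℂ) : Prop :=
  ρ.PosSemidef ∧ ρ.trace = 1

end PaperQI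

namespace PaperQI

/-!
Up to a phase, `p ↦ Ξ_ρ(p,q)` is the Fourier transform over `ℤ_d^n` of the `q`-th shifted diagonal
of `ρ`, so Plancherel gives `∑ |Ξ_ρ|² = d^n Tr[ρ²]`, and the triangle inequality together with
`|ρ_{kl}| ≤ (ρ_{kk} + ρ_{ll}) / 2` gives `|Ξ_ρ| ≤ 1`. Removing the `K` unimodular values leaves
`d^n Tr[ρ²] - K` as the sum of `|Ξ_ρ|²` over the `R_P(ρ) - K` remaining nonzero values, so its
average is at most the square of their maximum `1 - MG(ρ)`.
-/

section Matrix

variable {α β 𝕜 : Type*} [RCLike 𝕜]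

theorem norm_sq_apply_le_of_posSemidef {A : Matrix α α 𝕜} (hA : A.PosSemidef) (i j : α) :
    ‖A i j‖ ^ 2 ≤ RCLike.re (A i i) * RCLike.re (A j j) := by
  have hdet : 0 ≤ A i i * A j j - A i j * A j i :=
    det_fin_two (A.submatrix ![i, j] ![i, j]) ▸ (hA.submatrix ![i, j]).det_nonneg
  rw [← hA.isHermitian.coe_re_apply_self i, ← hA.isHermitian.coe_re_apply_self j,
    ← hA.isHermitian.apply j i, ← starRingEnd_apply, RCLike.mul_conj] at hdet
  exact sub_nonneg.mp (mod_cast hdet)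

theorem norm_apply_le_half_add_of_posSemidef {A : Matrix α α 𝕜} (hA : A.PosSemidef) (i j : α) :
    ‖A i j‖ ≤ (RCLike.re (A i i) + RCLike.re (A j j)) / 2 := by
  have diag_re_nonneg (k : α) : 0 ≤ RCLike.re (A k k) := (RCLike.nonneg_iff.mp hA.diag_nonneg).1
  refine abs_le_of_sq_le_sq' ?_ (by linarith [diag_re_nonneg i, diag_re_nonneg j]) |>.2
  nlinarith [norm_sq_apply_le_of_posSemidef hA i j,
    sq_nonneg (RCLike.re (A i i) - RCLike.re (A j j))]

theorem sum_norm_apply_perm_le_trace_of_posSemidef [Fintype α] {A : Matrix α α 𝕜}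
    (hA : A.PosSemidef) (σ : Equiv.Perm α) :
    ∑ i, ‖A i (σ i)‖ ≤ RCLike.re A.trace := by
  calc ∑ i, ‖A i (σ i)‖
      ≤ ∑ i, (RCLike.re (A i i) + RCLike.re (A (σ i) (σ i))) / 2 :=
        Finset.sum_le_sum fun i _ => norm_apply_le_half_add_of_posSemidef hA i (σ i)
    _ = (∑ i, RCLike.re (A i i) + ∑ i, RCLike.re (A (σ i) (σ i))) / 2 := by
        rw [← Finset.sum_div, Finset.sum_add_distrib]
    _ = RCLike.re A.trace := by
        rw [Equiv.sum_comp σ fun i => RCLike.re (A i i), add_self_div_two, Matrix.trace, map_sum]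
        rfl

theorem star_dotProduct_self_eq_sum_norm_sq [Fintype α] (v : α → 𝕜) :
    star v ⬝ᵥ v = ((∑ i, ‖v i‖ ^ 2 : ℝ) : 𝕜) := by
  simp [dotProduct, RCLike.conj_mul]

theorem trace_conjTranspose_mul_self_eq_sum_norm_sq [Fintype α] [Fintype β] (A : Matrix α β 𝕜) :
    (Aᴴ * A).trace = ((∑ j, ∑ i, ‖A i j‖ ^ 2 : ℝ) : 𝕜) := by
  simp [Matrix.trace, Matrix.mul_apply, RCLike.conj_mul]

theorem sum_norm_sq_mulVec_of_conjTranspose_mul_self [Fintype α] [Fintype β] [DecidableEq β]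
    {F : Matrix α β 𝕜} {c : ℝ} (hF : Fᴴ * F = (c : 𝕜) • 1) (v : β → 𝕜) :
    ∑ i, ‖(F *ᵥ v) i‖ ^ 2 = c * ∑ j, ‖v j‖ ^ 2 := by
  apply RCLike.ofReal_injective (K := 𝕜)
  rw [RCLike.ofReal_mul, ← star_dotProduct_self_eq_sum_norm_sq,
    ← star_dotProduct_self_eq_sum_norm_sq, star_mulVec, ← dotProduct_mulVec, mulVec_mulVec, hF,
    smul_mulVec, one_mulVec, dotProduct_smul, smul_eq_mul]

end Matrix

section IntermediateValues

open scoped Finset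

variable {ι E : Type*} [Fintype ι] [NormedAddCommGroup E]

theorem card_ne_zero_sub_card_norm_eq_one (f : ι → E) :
    (#{i | f i ≠ 0} : ℝ) - #{i | ‖f i‖ = 1} =
      #{i | f i ≠ 0 ∧ ‖f i‖ ≠ 1} := by
  have unimodular_eq : ({i | ‖f i‖ = 1} : Finset ι) = ({i | f i ≠ 0 ∧ ‖f i‖ = 1} : Finset ι) :=
    Finset.filter_congr fun i _ => ⟨fun h => ⟨norm_ne_zero_iff.mp (by simp [h]), h⟩, And.right⟩
  rw [unimodular_eq, ← Finset.filter_filter, ← Finset.filter_filter, sub_eq_iff_eq_add']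
  exact mod_cast (Finset.card_filter_add_card_filter_not _).symm

theorem sum_norm_sq_sub_card_norm_eq_one (f : ι → E) :
    ∑ i, ‖f i‖ ^ 2 - (#{i | ‖f i‖ = 1} : ℝ) =
      ∑ i with f i ≠ 0 ∧ ‖f i‖ ≠ 1, ‖f i‖ ^ 2 := by
  have sum_unimodular : ∑ i with ‖f i‖ = 1, ‖f i‖ ^ 2 = (#{i | ‖f i‖ = 1} : ℝ) := by
    rw [Finset.sum_congr rfl (g := fun _ => (1 : ℝ)) fun i hi => by
      rw [(Finset.mem_filter.mp hi).2, one_pow], Finset.sum_const, nsmul_one]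
  have sum_other : ∑ i with ¬‖f i‖ = 1, ‖f i‖ ^ 2 = ∑ i with f i ≠ 0 ∧ ‖f i‖ ≠ 1, ‖f i‖ ^ 2 := by
    simp only [and_comm (a := f _ ≠ 0), ← Finset.filter_filter]
    refine (Finset.sum_filter_of_ne fun i _ hi => ?_).symm
    exact norm_ne_zero_iff.mp (pow_ne_zero_iff two_ne_zero |>.mp hi)
  rw [← Finset.sum_filter_add_sum_filter_not _ (fun i => ‖f i‖ = 1), sum_unimodular, sum_other,
    add_sub_cancel_left]

theorem sqrt_average_norm_sq_le {f : ι → E} {M : ℝ} (hM : 0 ≤ M)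
    (hf : ∀ i, f i ≠ 0 → ‖f i‖ ≠ 1 → ‖f i‖ ≤ M) :
    √((∑ i, ‖f i‖ ^ 2 - (#{i | ‖f i‖ = 1} : ℝ)) /
      ((#{i | f i ≠ 0} : ℝ) - #{i | ‖f i‖ = 1})) ≤ M := by
  rw [sum_norm_sq_sub_card_norm_eq_one, card_ne_zero_sub_card_norm_eq_one, Real.sqrt_le_left hM]
  refine div_le_of_le_mul₀ (Nat.cast_nonneg _) (sq_nonneg M) ?_
  rw [mul_comm, ← nsmul_eq_mul]
  refine Finset.sum_le_card_nsmul _ _ _ fun i hi => ?_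
  obtain ⟨-, hne, hne_one⟩ := Finset.mem_filter.mp hi
  gcongr
  exact hf i hne hne_one

end IntermediateValues

section Character

variable {d n : ℕ} [NeZero d]

theorem ch_eq_stdAddChar (z : ZMod d) : ch d z = ZMod.stdAddChar z := by
  rw [ZMod.stdAddChar_apply, ZMod.toCircle_apply]
  rfl

theorem norm_ch (z : ZMod d) : ‖ch d z‖ = 1 := by
  rw [ch_eq_stdAddChar, AddChar.norm_apply]

theorem ch_add (a b : ZMod d) : ch d (a + b) = ch d a * ch d b := by
  simp only [ch_eq_stdAddChar, AddChar.map_add_eq_mul]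

theorem star_ch (a : ZMod d) : star (ch d a) = ch d (-a) := by
  simp only [ch_eq_stdAddChar, AddChar.map_neg_eq_conj, starRingEnd_apply]

/-- The character `p ↦ ξ^{p·m}` of `ℤ_d^n`, bundled so that orthogonality of characters applies. -/
noncomputable def dotChar (m : QV d n) : AddChar (QV d n) ℂ where
  toFun p := ch d (qdot p m)
  map_zero_eq_one' := by simp [ch_eq_stdAddChar, qdot]
  map_add_eq_mul' p p' := by rw [← ch_add]; exact congrArg _ (add_dotProduct p p' m)

theorem dotChar_apply (m p : QV d n) : dotChar m p = ch d (qdot p m) := rfl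

theorem dotChar_eq_zero_iff {m : QV d n} : dotChar m = 0 ↔ m = 0 := by
  have dotChar_apply_eq_one_iff (p : QV d n) : dotChar m p = 1 ↔ m ⬝ᵥ p = 0 := by
    rw [dotChar_apply, ch_eq_stdAddChar, ← AddChar.map_zero_eq_one (ZMod.stdAddChar (N := d)),
      ZMod.injective_stdAddChar.eq_iff, dotProduct_comm]
    rfl
  simp only [DFunLike.ext_iff, AddChar.zero_apply, dotChar_apply_eq_one_iff]
  exact dotProduct_eq_zero_iff

theorem sum_ch_qdot (m : QV d n) :
    ∑ p : QV d n, ch d (qdot p m) = if m = 0 then (d : ℂ) ^ n else 0 := by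
  simpa [dotChar_apply, dotChar_eq_zero_iff] using (dotChar m).sum_eq_ite

variable (d n) in
/-- The matrix of the unnormalised discrete Fourier transform `a ↦ (p ↦ ∑_k ξ^{-p·k} a_k)` on
`ℤ_d^n`; applied to the `q`-th shifted diagonal of `ρ` it yields `Ξ_ρ(·,q)` up to phases. -/
noncomputable def fourierMatrix : Mat d n :=
  Matrix.of fun p k => ch d (-qdot p k)

theorem conjTranspose_mul_fourierMatrix :
    (fourierMatrix d n)ᴴ * fourierMatrix d n = (((d : ℝ) ^ n : ℝ) : ℂ) • 1 := by
  ext k l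
  have entry (p : QV d n) : star (ch d (-qdot p k)) * ch d (-qdot p l) = ch d (qdot p (k - l)) := by
    rw [star_ch, ← ch_add, neg_neg, ← sub_eq_add_neg]
    exact congrArg _ (dotProduct_sub p k l).symm
  simp only [Matrix.mul_apply, conjTranspose_apply, fourierMatrix, of_apply, entry, sum_ch_qdot]
  simp [Matrix.one_apply, sub_eq_zero]

end Character

section CharacteristicFunction

variable {d n : ℕ} [Fact (Nat.Prime d)]

theorem xi_eq_fourierMatrix_mulVec (ρ : Mat d n) (p q : QV d n) :
    xi d n ρ (p, q) =
      ch d ((2 : ZMod d)⁻¹ * qdot p q) * (fourierMatrix d n *ᵥ fun k => ρ k (k - q)) p := by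
  have phase (k : QV d n) : ch d (qdot (-p) k + 2⁻¹ * qdot (-p) (-q)) =
      ch d (2⁻¹ * qdot p q) * ch d (-qdot p k) := by
    rw [add_comm, ch_add]
    simp [qdot]
  simp only [xi, Matrix.trace, Matrix.diag, Matrix.mul_apply, weyl, of_apply, mul_ite, mul_zero,
    Finset.sum_ite_eq', Finset.mem_univ, if_true, phase, ← sub_eq_add_neg, mulVec, dotProduct,
    fourierMatrix, Finset.mul_sum]
  exact Finset.sum_congr rfl fun k _ => by ring

theorem norm_xi (ρ : Mat d n) (p q : QV d n) :
    ‖xi d n ρ (p, q)‖ = ‖(fourierMatrix d n *ᵥ fun k => ρ k (k - q)) p‖ := by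
  rw [xi_eq_fourierMatrix_mulVec, norm_mul, norm_ch, one_mul]

theorem sum_norm_xi_sq (ρ : Mat d n) :
    ∑ pq, ‖xi d n ρ pq‖ ^ 2 = (d : ℝ) ^ n * (ρᴴ * ρ).trace.re := by
  calc ∑ pq, ‖xi d n ρ pq‖ ^ 2
      = ∑ q, ∑ p, ‖(fourierMatrix d n *ᵥ fun k => ρ k (k - q)) p‖ ^ 2 := by
        simp only [Fintype.sum_prod_type_right, norm_xi]
    _ = (d : ℝ) ^ n * ∑ k, ∑ q, ‖ρ k (k - q)‖ ^ 2 := by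
        simp only [sum_norm_sq_mulVec_of_conjTranspose_mul_self (c := (d : ℝ) ^ n)
          conjTranspose_mul_fourierMatrix]
        rw [← Finset.mul_sum, Finset.sum_comm]
    _ = (d : ℝ) ^ n * ∑ k, ∑ l, ‖ρ k l‖ ^ 2 := by
        congr! 2 with k
        exact Equiv.sum_comp (Equiv.subLeft k) fun l => ‖ρ k l‖ ^ 2
    _ = (d : ℝ) ^ n * (ρᴴ * ρ).trace.re := by
        rw [trace_conjTranspose_mul_self_eq_sum_norm_sq, Finset.sum_comm]
        rfl

theorem norm_xi_le_re_trace {ρ : Mat d n} (hρ : ρ.PosSemidef) (pq : QV d n × QV d n) :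
    ‖xi d n ρ pq‖ ≤ ρ.trace.re := by
  obtain ⟨p, q⟩ := pq
  calc ‖xi d n ρ (p, q)‖
      = ‖∑ k, ch d (-qdot p k) * ρ k (k - q)‖ := norm_xi ρ p q
    _ ≤ ∑ k, ‖ρ k (k - q)‖ :=
        norm_sum_le_of_le _ fun k _ => by rw [norm_mul, norm_ch, one_mul]
    _ ≤ ρ.trace.re := sum_norm_apply_perm_le_trace_of_posSemidef hρ (Equiv.subRight q)

end CharacteristicFunction

section MagicGap

variable {d n : ℕ} [Fact (Nat.Prime d)]

theorem magicGap_nonneg {ρ : Mat d n} (hρ : IsState d n ρ) : 0 ≤ magicGap d n ρ := by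
  have norm_xi_le_one (pq : QV d n × QV d n) : ‖xi d n ρ pq‖ ≤ 1 := by
    simpa [hρ.2] using norm_xi_le_re_trace hρ.1 pq
  simp only [magicGap]
  split_ifs
  · exact sub_nonneg.mpr (Finset.max'_le _ _ _ (Finset.forall_mem_image.mpr fun pq _ =>
      norm_xi_le_one pq))
  · exact le_rfl

theorem exists_magicGap_eq_one_sub (ρ : Mat d n) :
    ∃ M, 0 ≤ M ∧ (∀ pq, xi d n ρ pq ≠ 0 → ‖xi d n ρ pq‖ ≠ 1 → ‖xi d n ρ pq‖ ≤ M) ∧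
      magicGap d n ρ = 1 - M := by
  have mem_values {pq : QV d n × QV d n} (h0 : xi d n ρ pq ≠ 0) (h1 : ‖xi d n ρ pq‖ ≠ 1) :
      ‖xi d n ρ pq‖ ∈ (Finset.univ.filter fun pq : QV d n × QV d n =>
        xi d n ρ pq ≠ 0 ∧ ‖xi d n ρ pq‖ ≠ 1).image fun pq => ‖xi d n ρ pq‖ :=
    Finset.mem_image_of_mem _ (Finset.mem_filter.mpr ⟨Finset.mem_univ _, h0, h1⟩)
  simp only [magicGap]
  split_ifs with hne
  · refine ⟨_, ?_, fun pq h0 h1 => Finset.le_max' _ _ (mem_values h0 h1), rfl⟩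
    obtain ⟨pq, -, hpq⟩ := Finset.mem_image.mp (Finset.max'_mem _ hne)
    exact hpq ▸ norm_nonneg _
  · exact ⟨1, zero_le_one, fun pq h0 h1 => absurd ⟨_, mem_values h0 h1⟩ hne, (sub_self 1).symm⟩

-- If every `|Ξ_ρ|` is `0` or `1`, the quotient is `0 / 0 = 0` and the bound reads `0 ≤ 1`.
theorem magicGap_le_one_sub_sqrt {ρ : Mat d n} (hρ : ρ.IsHermitian) :
    magicGap d n ρ ≤ 1 - √(((d : ℝ) ^ n * (ρ * ρ).trace.re -
        (({pq | ‖xi d n ρ pq‖ = 1} : Finset (QV d n × QV d n)).card : ℝ)) /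
      ((({pq | xi d n ρ pq ≠ 0} : Finset (QV d n × QV d n)).card : ℝ) -
        ({pq | ‖xi d n ρ pq‖ = 1} : Finset (QV d n × QV d n)).card)) := by
  obtain ⟨M, hM, hle, hgap⟩ := exists_magicGap_eq_one_sub ρ
  have parseval : ∑ pq, ‖xi d n ρ pq‖ ^ 2 = (d : ℝ) ^ n * (ρ * ρ).trace.re := by
    rw [sum_norm_xi_sq, hρ.eq]
  rw [hgap, ← parseval]
  exact sub_le_sub_left (sqrt_average_norm_sq_le hM hle) 1

end MagicGap

/-- If the `n`-qudit state `ρ` is not an MSPS, then with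
`R_P(ρ) = |{(p,q) : Ξ_ρ(p,q) ≠ 0}|` and `K = |{(p,q) : |Ξ_ρ(p,q)| = 1}|`,
`0 ≤ MG(ρ) ≤ 1 - sqrt((d^n Tr[ρ²] - K)/(R_P(ρ) - K))`. -/
theorem statement5 (d n : ℕ) [Fact (Nat.Prime d)] (hd : Odd d) (hn : 1 ≤ n)
    (ρ : Mat d n) (hρ : IsState d n ρ) (hnot : ¬ IsMSPS d n ρ) :
    0 ≤ magicGap d n ρ ∧
    magicGap d n ρ ≤ 1 - Real.sqrt
      (((d : ℝ) ^ n * (ρ * ρ).trace.re -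
          ((Finset.univ.filter fun pq : QV d n × QV d n =>
              ‖xi d n ρ pq‖ = 1).card : ℝ)) /
        (((Finset.univ.filter fun pq : QV d n × QV d n =>
              xi d n ρ pq ≠ 0).card : ℝ) -
          ((Finset.univ.filter fun pq : QV d n × QV d n =>
              ‖xi d n ρ pq‖ = 1).card : ℝ))) :=
  ⟨magicGap_nonneg hρ, magicGap_le_one_sub_sqrt hρ.1.isHermitian⟩

end PaperQI
end

section
/- Monotonicity of relative entropy under convolution: for all n-qudit states ρ, σ, τ, D(ρ ⊠ τ ‖ σ ⊠ τ) ≤ D(ρ ‖ σ). -/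
open scoped BigOperators ComplexOrder Classical ENNReal
open Matrix

namespace PaperQI

/-!
When `supp ρ ⊆ supp σ`, the entropy `D(ρ‖σ)` is the limit as `t → ∞` of
`∫₀ᵗ ⟨ρ, (L_σ + s R_ρ)⁻¹ ρ⟩ ds - Tr ρ log t`, where `L_σ` and `R_ρ` are left multiplication by `σ`
and right multiplication by `ρ`. The integrand is the maximum over `X` of
`2 Re Tr X†ρ - Tr X†σX - s Tr X†Xρ`, and it decreases under a trace-preserving completely positive
map: pulling `X` back along the adjoint map preserves the linear term and, by the Kadison–Schwarz
inequality, does not increase the two subtracted terms. Convolution with `τ` is a composition of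
three such maps: tensoring with `τ`, conjugation by `U` and the partial trace.
-/

section RealFunctions

open Filter Topology

lemma hasDerivAt_mul_log_add_mul {w p q t : ℝ} (hp : 0 ≤ p) (hq : 0 ≤ q) (ht : 0 ≤ t)
    (h : q = 0 → w * p = 0) :
    HasDerivAt (fun s ↦ w * p * Real.log (q + s * p)) (w * (p ^ 2 / (q + t * p))) t := by
  rcases hq.eq_or_lt with rfl | hq
  · rcases mul_eq_zero.1 (h rfl) with rfl | rfl <;> simpa using hasDerivAt_const t (0 : ℝ)
  · have hpos : 0 < q + t * p := by positivity
    have hlin : HasDerivAt (fun s : ℝ ↦ q + s * p) p t := by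
      simpa using ((hasDerivAt_id t).mul_const p).const_add q
    exact ((hlin.log hpos.ne').const_mul (w * p)).congr_deriv (by ring)

lemma tendsto_mul_log_add_mul_sub_log {p : ℝ} (hp : 0 ≤ p) (q : ℝ) :
    Tendsto (fun t ↦ p * (Real.log (q + t * p) - Real.log t)) atTop (𝓝 (p * Real.log p)) := by
  rcases hp.eq_or_lt with rfl | hp
  · simp
  have hlim : Tendsto (fun t ↦ q / t + p) atTop (𝓝 p) := by
    simpa using (tendsto_const_nhds (x := q)).div_atTop tendsto_id |>.add_const p
  refine ((hlim.log hp.ne').congr' ?_).const_mul p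
  filter_upwards [eventually_gt_atTop 0, hlim.eventually_ne hp.ne'] with t ht hne
  have hsplit : q + t * p = t * (q / t + p) := by field_simp
  rw [hsplit, Real.log_mul ht.ne' hne, add_sub_cancel_left]

end RealFunctions

section Quadratic

variable {𝕜 : Type*} [RCLike 𝕜]

lemma two_mul_re_sub_mul_norm_sq_le {p c : ℝ} (hc : 0 ≤ c) (h : c = 0 → p = 0) (x u : 𝕜) :
    2 * (p * RCLike.re (star x * u)) - c * ‖x‖ ^ 2 ≤ ‖u‖ ^ 2 * (p ^ 2 / c) := by
  rcases hc.eq_or_lt with rfl | hc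
  · simp [h rfl]
  have hsq : ‖(p : 𝕜) * u - (c : 𝕜) * x‖ ^ 2 =
      p ^ 2 * ‖u‖ ^ 2 - c * (2 * (p * RCLike.re (star x * u)) - c * ‖x‖ ^ 2) := by
    simp only [RCLike.norm_sq_eq_def, RCLike.star_def, map_sub, RCLike.mul_re, RCLike.mul_im,
      RCLike.conj_re, RCLike.conj_im, RCLike.ofReal_re, RCLike.ofReal_im]
    ring
  rw [← mul_div_assoc, le_div_iff₀' hc]
  nlinarith [sq_nonneg ‖(p : 𝕜) * u - (c : 𝕜) * x‖]

lemma two_mul_re_sub_mul_norm_sq_eq (p c : ℝ) (u : 𝕜) :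
    2 * (p * RCLike.re (star (((p / c : ℝ) : 𝕜) * u) * u)) - c * ‖((p / c : ℝ) : 𝕜) * u‖ ^ 2 =
      ‖u‖ ^ 2 * (p ^ 2 / c) := by
  have hre : RCLike.re (star (((p / c : ℝ) : 𝕜) * u) * u) = p / c * ‖u‖ ^ 2 := by
    simp only [RCLike.norm_sq_eq_def, RCLike.star_def, RCLike.mul_re, RCLike.mul_im,
      RCLike.conj_re, RCLike.conj_im, RCLike.ofReal_re, RCLike.ofReal_im]
    ring
  rw [hre, norm_mul, mul_pow, RCLike.norm_ofReal, sq_abs]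
  rcases eq_or_ne c 0 with rfl | hc
  · simp
  · field_simp
    ring

end Quadratic

section Kraus

variable {𝕜 m k ι : Type*} [RCLike 𝕜] [Fintype m]

lemma re_trace_mul_nonneg_of_posSemidef {A B : Matrix m m 𝕜} (hA : A.PosSemidef)
    (hB : B.PosSemidef) : 0 ≤ RCLike.re (A * B).trace := by
  obtain ⟨r, v, rfl⟩ := posSemidef_iff_eq_sum_vecMulVec.1 hB
  rw [Matrix.mul_sum, trace_sum, map_sum]
  refine Finset.sum_nonneg fun i _ ↦ ?_
  rw [mul_vecMulVec, trace_vecMulVec, dotProduct_comm]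
  exact hA.re_dotProduct_nonneg (v i)

/-- The inclusion `supp ρ ⊆ supp σ` of supports, stated through kernels; this is the intended notion
for Hermitian matrices. -/
def SupportLE (ρ σ : Matrix m m 𝕜) : Prop :=
  ∀ v, σ *ᵥ v = 0 → ρ *ᵥ v = 0

variable [Fintype ι]

/-- The completely positive map `X ↦ ∑ a, K a X (K a)†` with Kraus operators `K`. It is trace
preserving when `∑ a, (K a)† K a = 1`. Its adjoint for the trace pairing has Kraus operators
`(K a)†`. -/
def krausMap (K : ι → Matrix k m 𝕜) (X : Matrix m m 𝕜) : Matrix k k 𝕜 :=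
  ∑ a, K a * X * (K a)ᴴ

lemma posSemidef_krausMap [Finite k] (K : ι → Matrix k m 𝕜) {X : Matrix m m 𝕜} (hX : X.PosSemidef) :
    (krausMap K X).PosSemidef :=
  posSemidef_sum _ fun a _ ↦ hX.mul_mul_conjTranspose_same (K a)

lemma conjTranspose_krausMap (K : ι → Matrix k m 𝕜) (X : Matrix m m 𝕜) :
    (krausMap K X)ᴴ = krausMap K Xᴴ := by
  simp [krausMap, conjTranspose_sum, Matrix.mul_assoc]

variable [Fintype k]

lemma trace_mul_krausMap (K : ι → Matrix k m 𝕜) (Y : Matrix k k 𝕜) (X : Matrix m m 𝕜) :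
    (Y * krausMap K X).trace = (krausMap (fun a ↦ (K a)ᴴ) Y * X).trace := by
  simp only [krausMap, Matrix.mul_sum, Matrix.sum_mul, trace_sum, conjTranspose_conjTranspose]
  refine Finset.sum_congr rfl fun a _ ↦ ?_
  rw [Matrix.mul_assoc (K a)ᴴ, Matrix.mul_assoc (K a)ᴴ, trace_mul_comm (K a)ᴴ]
  simp only [Matrix.mul_assoc]

lemma trace_krausMap [DecidableEq m] {K : ι → Matrix k m 𝕜} (hK : ∑ a, (K a)ᴴ * K a = 1)
    (X : Matrix m m 𝕜) : (krausMap K X).trace = X.trace := by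
  simp only [krausMap, trace_sum, trace_mul_comm _ (K _)ᴴ, ← Matrix.mul_assoc]
  rw [← trace_sum, ← Matrix.sum_mul, hK, Matrix.one_mul]

lemma SupportLE.map_krausMap {ρ σ : Matrix m m 𝕜} (h : SupportLE ρ σ) (hσ : σ.PosSemidef)
    (K : ι → Matrix k m 𝕜) : SupportLE (krausMap K ρ) (krausMap K σ) := by
  intro v hv
  have hquad : ∑ a, star ((K a)ᴴ *ᵥ v) ⬝ᵥ (σ *ᵥ ((K a)ᴴ *ᵥ v)) = 0 := by
    have h0 := congrArg (star v ⬝ᵥ ·) hv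
    simpa only [krausMap, sum_mulVec, dotProduct_sum, star_mulVec,
      conjTranspose_conjTranspose, ← dotProduct_mulVec, mulVec_mulVec, dotProduct_zero,
      Matrix.mul_assoc] using h0
  have hker : ∀ a, σ *ᵥ ((K a)ᴴ *ᵥ v) = 0 := fun a ↦
    (hσ.dotProduct_mulVec_zero_iff _).1 <|
      (Finset.sum_eq_zero_iff_of_nonneg fun a _ ↦ hσ.dotProduct_mulVec_nonneg _).1 hquad a
        (Finset.mem_univ a)
  simp only [krausMap, sum_mulVec, ← mulVec_mulVec, h _ (hker _), mulVec_zero,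
    Finset.sum_const_zero]

/-- Kadison–Schwarz: the difference is `∑ a, (X L_a† - L_a† L(X))† (X L_a† - L_a† L(X))`. -/
lemma posSemidef_krausMap_conjTranspose_mul_self_sub [DecidableEq k] {L : ι → Matrix k m 𝕜}
    (hL : ∑ a, L a * (L a)ᴴ = 1) (X : Matrix m m 𝕜) :
    (krausMap L (Xᴴ * X) - (krausMap L X)ᴴ * krausMap L X).PosSemidef := by
  set Y := krausMap L X with hY
  have hcross : ∑ a, L a * Xᴴ * (L a)ᴴ = Yᴴ := by rw [hY, conjTranspose_krausMap]; rfl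
  have hsum : krausMap L (Xᴴ * X) - Yᴴ * Y =
      ∑ a, (X * (L a)ᴴ - (L a)ᴴ * Y)ᴴ * (X * (L a)ᴴ - (L a)ᴴ * Y) := by
    have hexpand : ∀ a, (X * (L a)ᴴ - (L a)ᴴ * Y)ᴴ * (X * (L a)ᴴ - (L a)ᴴ * Y) =
        L a * (Xᴴ * X) * (L a)ᴴ - (L a * Xᴴ * (L a)ᴴ) * Y - Yᴴ * (L a * X * (L a)ᴴ) +
          Yᴴ * (L a * (L a)ᴴ) * Y := fun a ↦ by
      simp only [conjTranspose_sub, conjTranspose_mul, conjTranspose_conjTranspose,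
        Matrix.sub_mul, Matrix.mul_sub, Matrix.mul_assoc]
      abel
    simp only [hexpand, Finset.sum_add_distrib, Finset.sum_sub_distrib, ← Matrix.sum_mul,
      ← Matrix.mul_sum, hL, hcross, Matrix.mul_one]
    rw [← krausMap, ← krausMap, ← hY]
    abel
  rw [hsum]
  exact posSemidef_sum _ fun a _ ↦ posSemidef_conjTranspose_mul_self _

end Kraus

section Spectral

variable {𝕜 m : Type*} [RCLike 𝕜] [Fintype m] [DecidableEq m] {ρ σ : Matrix m m 𝕜}

/-- The matrix `Vᴴ X U` of `X` with respect to the eigenbases `U` of `ρ` (columns) and `V` of `σ`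
(rows). -/
noncomputable def eigenMatrix (hρ : ρ.IsHermitian) (hσ : σ.IsHermitian) (X : Matrix m m 𝕜) :
    Matrix m m 𝕜 :=
  (hσ.eigenvectorUnitary : Matrix m m 𝕜)ᴴ * X * (hρ.eigenvectorUnitary : Matrix m m 𝕜)

/-- The squared overlap `|⟨v_j, u_i⟩|²` of the `j`-th eigenvector of `σ` with the `i`-th
eigenvector of `ρ`. -/
noncomputable def eigenOverlap (hρ : ρ.IsHermitian) (hσ : σ.IsHermitian) (j i : m) : ℝ :=
  ‖eigenMatrix hρ hσ 1 j i‖ ^ 2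

lemma eigenMatrix_surjective (hρ : ρ.IsHermitian) (hσ : σ.IsHermitian) :
    Function.Surjective (eigenMatrix hρ hσ) := by
  intro Y
  refine ⟨(hσ.eigenvectorUnitary : Matrix m m 𝕜) * Y * (hρ.eigenvectorUnitary : Matrix m m 𝕜)ᴴ, ?_⟩
  have hU : (hρ.eigenvectorUnitary : Matrix m m 𝕜)ᴴ * hρ.eigenvectorUnitary = 1 :=
    Unitary.coe_star_mul_self _
  have hV : (hσ.eigenvectorUnitary : Matrix m m 𝕜)ᴴ * hσ.eigenvectorUnitary = 1 :=
    Unitary.coe_star_mul_self _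
  simp only [eigenMatrix, Matrix.mul_assoc, hU, Matrix.mul_one]
  rw [← Matrix.mul_assoc, hV, Matrix.one_mul]

lemma cfc_eq_eigenvectorUnitary_mul (hρ : ρ.IsHermitian) (f : ℝ → ℝ) :
    cfc f ρ = (hρ.eigenvectorUnitary : Matrix m m 𝕜) *
      diagonal (fun i ↦ (f (hρ.eigenvalues i) : 𝕜)) *
      (hρ.eigenvectorUnitary : Matrix m m 𝕜)ᴴ := by
  rw [hρ.cfc_eq, IsHermitian.cfc, Unitary.conjStarAlgAut_apply]
  rfl

lemma trace_conjTranspose_mul_cfc_mul_mul_cfc (hρ : ρ.IsHermitian) (hσ : σ.IsHermitian)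
    (f g : ℝ → ℝ) (X Y : Matrix m m 𝕜) :
    (Xᴴ * cfc g σ * Y * cfc f ρ).trace =
      ∑ j, ∑ i, star (eigenMatrix hρ hσ X j i) * eigenMatrix hρ hσ Y j i *
        ((g (hσ.eigenvalues j) * f (hρ.eigenvalues i) : ℝ) : 𝕜) := by
  have hdiag : (Xᴴ * cfc g σ * Y * cfc f ρ).trace =
      ((eigenMatrix hρ hσ X)ᴴ * diagonal (fun j ↦ (g (hσ.eigenvalues j) : 𝕜)) *
        eigenMatrix hρ hσ Y * diagonal (fun i ↦ (f (hρ.eigenvalues i) : 𝕜))).trace := by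
    rw [cfc_eq_eigenvectorUnitary_mul hρ, cfc_eq_eigenvectorUnitary_mul hσ, ← Matrix.mul_assoc,
      trace_mul_comm]
    simp only [eigenMatrix, conjTranspose_mul, conjTranspose_conjTranspose, Matrix.mul_assoc]
  rw [hdiag, trace, Finset.sum_comm]
  refine Finset.sum_congr rfl fun i _ ↦ ?_
  rw [diag_apply, mul_diagonal, mul_apply, Finset.sum_mul]
  refine Finset.sum_congr rfl fun j _ ↦ ?_
  rw [mul_diagonal, conjTranspose_apply]
  push_cast
  ring

lemma re_trace_cfc_mul_cfc (hρ : ρ.IsHermitian) (hσ : σ.IsHermitian) (f g : ℝ → ℝ) :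
    RCLike.re (cfc g σ * cfc f ρ).trace =
      ∑ j, ∑ i, eigenOverlap hρ hσ j i * (g (hσ.eigenvalues j) * f (hρ.eigenvalues i)) := by
  have h := trace_conjTranspose_mul_cfc_mul_mul_cfc hρ hσ f g 1 1
  rw [conjTranspose_one, Matrix.one_mul, Matrix.mul_one] at h
  rw [h]
  simp only [map_sum, RCLike.star_def, RCLike.conj_mul, eigenOverlap]
  norm_cast

lemma SupportLE.eigenOverlap_mul_eq_zero (h : SupportLE ρ σ) (hρ : ρ.IsHermitian)
    (hσ : σ.IsHermitian) {j : m} (hj : hσ.eigenvalues j = 0) (i : m) :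
    eigenOverlap hρ hσ j i * hρ.eigenvalues i = 0 := by
  have hker : ρ *ᵥ ⇑(hσ.eigenvectorBasis j) = 0 :=
    h _ (by rw [hσ.mulVec_eigenvectorBasis, hj, zero_smul])
  have hzero : eigenMatrix hρ hσ ρ j i = 0 := by
    have hrow : ((hσ.eigenvectorUnitary : Matrix m m 𝕜)ᴴ * ρ) j = 0 := by
      rw [← hρ.eq, ← conjTranspose_mul]
      exact funext fun a ↦ star_eq_zero.2 (congrFun hker a)
    rw [eigenMatrix, mul_apply]
    simp [hrow]
  have hmul : eigenMatrix hρ hσ ρ j i = eigenMatrix hρ hσ 1 j i * (hρ.eigenvalues i : 𝕜) := by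
    have hcol : (ρ * (hρ.eigenvectorUnitary : Matrix m m 𝕜)) =
        (hρ.eigenvectorUnitary : Matrix m m 𝕜) * diagonal (fun i ↦ (hρ.eigenvalues i : 𝕜)) := by
      ext a i
      rw [mul_diagonal, mul_comm, ← RCLike.real_smul_eq_coe_mul]
      exact congrFun (hρ.mulVec_eigenvectorBasis i) a
    rw [eigenMatrix, Matrix.mul_assoc, hcol, ← Matrix.mul_assoc, mul_diagonal, eigenMatrix,
      Matrix.mul_one]
  rcases mul_eq_zero.1 (hmul.symm.trans hzero) with h0 | h0
  · simp [eigenOverlap, h0]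
  · simp [RCLike.ofReal_eq_zero.1 h0]

end Spectral

section Resolvent

variable {𝕜 m : Type*} [RCLike 𝕜] [Fintype m] {ρ σ : Matrix m m 𝕜}

/-- The concave quadratic functional whose maximum over `X` is `⟨ρ, (L_σ + t R_ρ)⁻¹ ρ⟩`, where
`L_σ` and `R_ρ` are left multiplication by `σ` and right multiplication by `ρ`. -/
def quadForm (ρ σ : Matrix m m 𝕜) (t : ℝ) (X : Matrix m m 𝕜) : ℝ :=
  2 * RCLike.re (Xᴴ * ρ).trace - RCLike.re (Xᴴ * σ * X).trace - t * RCLike.re (Xᴴ * X * ρ).trace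

lemma quadForm_krausMap_le {k ι : Type*} [Fintype k] [Fintype ι] [DecidableEq m]
    {K : ι → Matrix k m 𝕜} (hK : ∑ a, (K a)ᴴ * K a = 1) (hρ : ρ.PosSemidef) (hσ : σ.PosSemidef)
    {t : ℝ} (ht : 0 ≤ t) (X : Matrix k k 𝕜) :
    quadForm (krausMap K ρ) (krausMap K σ) t X ≤
      quadForm ρ σ t (krausMap (fun a ↦ (K a)ᴴ) X) := by
  set L : ι → Matrix m k 𝕜 := fun a ↦ (K a)ᴴ with hL
  have hunital : ∑ a, L a * (L a)ᴴ = 1 := by simpa only [hL, conjTranspose_conjTranspose] using hK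
  have hlin : (Xᴴ * krausMap K ρ).trace = ((krausMap L X)ᴴ * ρ).trace := by
    rw [trace_mul_krausMap, conjTranspose_krausMap]
  have hquadρ : RCLike.re ((krausMap L X)ᴴ * krausMap L X * ρ).trace ≤
      RCLike.re (Xᴴ * X * krausMap K ρ).trace := by
    have h := re_trace_mul_nonneg_of_posSemidef
      (posSemidef_krausMap_conjTranspose_mul_self_sub hunital X) hρ
    rw [Matrix.sub_mul, trace_sub, map_sub, sub_nonneg] at h
    rwa [trace_mul_krausMap]
  have hquadσ : RCLike.re ((krausMap L X)ᴴ * σ * krausMap L X).trace ≤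
      RCLike.re (Xᴴ * krausMap K σ * X).trace := by
    have h := re_trace_mul_nonneg_of_posSemidef
      (posSemidef_krausMap_conjTranspose_mul_self_sub hunital Xᴴ) hσ
    rw [← conjTranspose_krausMap, conjTranspose_conjTranspose, conjTranspose_conjTranspose,
      Matrix.sub_mul, trace_sub, map_sub, sub_nonneg] at h
    rwa [trace_mul_cycle, trace_mul_cycle Xᴴ, trace_mul_krausMap]
  rw [quadForm, quadForm, hlin]
  gcongr

variable [DecidableEq m]

lemma quadForm_eq_sum (hρ : ρ.IsHermitian) (hσ : σ.IsHermitian) (t : ℝ) (X : Matrix m m 𝕜) :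
    quadForm ρ σ t X = ∑ j, ∑ i,
      (2 * (hρ.eigenvalues i *
          RCLike.re (star (eigenMatrix hρ hσ X j i) * eigenMatrix hρ hσ 1 j i)) -
        (hσ.eigenvalues j + t * hρ.eigenvalues i) * ‖eigenMatrix hρ hσ X j i‖ ^ 2) := by
  have hlin := trace_conjTranspose_mul_cfc_mul_mul_cfc hρ hσ (fun x ↦ x) (fun _ ↦ 1) X 1
  have hquadσ := trace_conjTranspose_mul_cfc_mul_mul_cfc hρ hσ (fun _ ↦ 1) (fun x ↦ x) X X
  have hquadρ := trace_conjTranspose_mul_cfc_mul_mul_cfc hρ hσ (fun x ↦ x) (fun _ ↦ 1) X X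
  rw [cfc_const_one ℝ σ, cfc_id' ℝ ρ, Matrix.mul_one, Matrix.mul_one] at hlin
  rw [cfc_const_one ℝ ρ, cfc_id' ℝ σ, Matrix.mul_one] at hquadσ
  rw [cfc_const_one ℝ σ, cfc_id' ℝ ρ, Matrix.mul_one] at hquadρ
  rw [quadForm, hlin, hquadσ, hquadρ]
  simp only [map_sum, Finset.mul_sum, ← Finset.sum_sub_distrib, RCLike.re_mul_ofReal,
    RCLike.star_def, RCLike.conj_mul]
  refine Finset.sum_congr rfl fun j _ ↦ Finset.sum_congr rfl fun i _ ↦ ?_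
  norm_cast
  ring

/-- `⟨ρ, (L_σ + t R_ρ)⁻¹ ρ⟩` in the eigenbases of `ρ` and `σ`, where `L_σ` and `R_ρ` are left
multiplication by `σ` and right multiplication by `ρ`; terms with zero denominator are dropped. -/
noncomputable def resolventForm (hρ : ρ.IsHermitian) (hσ : σ.IsHermitian) (t : ℝ) : ℝ :=
  ∑ j, ∑ i, eigenOverlap hρ hσ j i *
    (hρ.eigenvalues i ^ 2 / (hσ.eigenvalues j + t * hρ.eigenvalues i))

lemma isGreatest_resolventForm (hρ : ρ.PosSemidef) (hσ : σ.PosSemidef) {t : ℝ} (ht : 0 < t) :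
    IsGreatest (Set.range (quadForm ρ σ t)) (resolventForm hρ.isHermitian hσ.isHermitian t) := by
  constructor
  · obtain ⟨X, hX⟩ := eigenMatrix_surjective hρ.isHermitian hσ.isHermitian <| of fun j i ↦
      ((hρ.isHermitian.eigenvalues i / (hσ.isHermitian.eigenvalues j +
        t * hρ.isHermitian.eigenvalues i) : ℝ) : 𝕜) *
          eigenMatrix hρ.isHermitian hσ.isHermitian 1 j i
    refine ⟨X, ?_⟩
    rw [quadForm_eq_sum hρ.isHermitian hσ.isHermitian, hX]
    exact Finset.sum_congr rfl fun j _ ↦ Finset.sum_congr rfl fun i _ ↦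
      two_mul_re_sub_mul_norm_sq_eq _ _ _
  · rintro _ ⟨X, rfl⟩
    rw [quadForm_eq_sum hρ.isHermitian hσ.isHermitian]
    refine Finset.sum_le_sum fun j _ ↦ Finset.sum_le_sum fun i _ ↦ ?_
    have hp := hρ.eigenvalues_nonneg i
    have hq := hσ.eigenvalues_nonneg j
    refine two_mul_re_sub_mul_norm_sq_le (by positivity) (fun h ↦ ?_) _ _
    have htp : t * hρ.isHermitian.eigenvalues i = 0 := by nlinarith
    exact (mul_eq_zero.1 htp).resolve_left ht.ne'

lemma resolventForm_krausMap_le {k ι : Type*} [Fintype k] [DecidableEq k] [Fintype ι]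
    {K : ι → Matrix k m 𝕜} (hK : ∑ a, (K a)ᴴ * K a = 1) (hρ : ρ.PosSemidef) (hσ : σ.PosSemidef)
    {t : ℝ} (ht : 0 < t) :
    resolventForm (posSemidef_krausMap K hρ).isHermitian (posSemidef_krausMap K hσ).isHermitian t ≤
      resolventForm hρ.isHermitian hσ.isHermitian t := by
  obtain ⟨X, hX⟩ :=
    (isGreatest_resolventForm (posSemidef_krausMap K hρ) (posSemidef_krausMap K hσ) ht).1
  rw [← hX]
  exact (quadForm_krausMap_le hK hρ hσ ht.le X).trans
    ((isGreatest_resolventForm hρ hσ ht).2 ⟨_, rfl⟩)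

end Resolvent

section DataProcessing

open Filter Topology

variable {𝕜 m : Type*} [RCLike 𝕜] [Fintype m] [DecidableEq m] {ρ σ : Matrix m m 𝕜}

/-- `⟨ρ, log (L_σ + t R_ρ) 1⟩` in the eigenbases of `ρ` and `σ`, a primitive of
`resolventForm hρ hσ` on `t ≥ 0`. -/
noncomputable def logForm (hρ : ρ.IsHermitian) (hσ : σ.IsHermitian) (t : ℝ) : ℝ :=
  ∑ j, ∑ i, eigenOverlap hρ hσ j i * hρ.eigenvalues i *
    Real.log (hσ.eigenvalues j + t * hρ.eigenvalues i)

lemma hasDerivAt_logForm (hρ : ρ.PosSemidef) (hσ : σ.PosSemidef) (h : SupportLE ρ σ) {t : ℝ}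
    (ht : 0 ≤ t) :
    HasDerivAt (logForm hρ.isHermitian hσ.isHermitian)
      (resolventForm hρ.isHermitian hσ.isHermitian t) t :=
  .fun_sum fun j _ ↦ .fun_sum fun i _ ↦
    hasDerivAt_mul_log_add_mul (hρ.eigenvalues_nonneg i) (hσ.eigenvalues_nonneg j) ht fun hj ↦
      h.eigenOverlap_mul_eq_zero hρ.isHermitian hσ.isHermitian hj i

lemma logForm_zero (hρ : ρ.IsHermitian) (hσ : σ.IsHermitian) :
    logForm hρ hσ 0 = RCLike.re (ρ * cfc Real.log σ).trace := by
  have h := re_trace_cfc_mul_cfc hρ hσ (fun x ↦ x) Real.log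
  rw [cfc_id' ℝ ρ, trace_mul_comm] at h
  simp only [h, logForm, zero_mul, add_zero]
  exact Finset.sum_congr rfl fun j _ ↦ Finset.sum_congr rfl fun i _ ↦ by ring

lemma tendsto_logForm_sub_log (hρ : ρ.PosSemidef) (hσ : σ.IsHermitian) :
    Tendsto (fun t ↦ logForm hρ.isHermitian hσ t - RCLike.re ρ.trace * Real.log t) atTop
      (𝓝 (RCLike.re (ρ * cfc Real.log ρ).trace)) := by
  have hH := hρ.isHermitian
  have htrace : RCLike.re ρ.trace =
      ∑ j, ∑ i, eigenOverlap hH hσ j i * hH.eigenvalues i := by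
    simpa only [cfc_const_one ℝ σ, cfc_id' ℝ ρ, Matrix.one_mul, one_mul] using
      re_trace_cfc_mul_cfc hH hσ (fun x ↦ x) fun _ ↦ 1
  have hentropy : RCLike.re (ρ * cfc Real.log ρ).trace =
      ∑ j, ∑ i, eigenOverlap hH hσ j i * (hH.eigenvalues i * Real.log (hH.eigenvalues i)) := by
    have hcont : ContinuousOn Real.log (spectrum ℝ ρ) :=
      (finite_real_spectrum (A := ρ)).continuousOn _
    have hmul : cfc (fun x ↦ x * Real.log x) ρ = ρ * cfc Real.log ρ := by
      rw [cfc_mul (fun x ↦ x) Real.log ρ, cfc_id' ℝ ρ]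
    simpa only [cfc_const_one ℝ σ, hmul, Matrix.one_mul, one_mul] using
      re_trace_cfc_mul_cfc hH hσ (fun x ↦ x * Real.log x) fun _ ↦ 1
  rw [hentropy]
  refine (tendsto_finsetSum _ fun j _ ↦ tendsto_finsetSum _ fun i _ ↦
    (tendsto_mul_log_add_mul_sub_log (hρ.eigenvalues_nonneg i) (hσ.eigenvalues j)).const_mul
      (eigenOverlap hH hσ j i)).congr fun t ↦ ?_
  simp only [logForm, htrace, Finset.sum_mul, ← Finset.sum_sub_distrib]
  exact Finset.sum_congr rfl fun j _ ↦ Finset.sum_congr rfl fun i _ ↦ by ring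

/-- The quantum relative entropy `D(ρ‖σ)`, equal to `Tr[ρ (log ρ - log σ)]` if
`supp ρ ⊆ supp σ` and to `+∞` otherwise; `cfc Real.log` vanishes on kernels. -/
noncomputable def relativeEntropy (ρ σ : Matrix m m 𝕜) : EReal :=
  if SupportLE ρ σ then
    ((RCLike.re (ρ * (cfc Real.log ρ - cfc Real.log σ)).trace : ℝ) : EReal)
  else ⊤

lemma tendsto_logForm_sub_zero_sub_log (hρ : ρ.PosSemidef) (hσ : σ.IsHermitian) :
    Tendsto (fun t ↦ logForm hρ.isHermitian hσ t - logForm hρ.isHermitian hσ 0 -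
      RCLike.re ρ.trace * Real.log t) atTop
      (𝓝 (RCLike.re (ρ * (cfc Real.log ρ - cfc Real.log σ)).trace)) := by
  rw [Matrix.mul_sub, trace_sub, map_sub, ← logForm_zero hρ.isHermitian hσ]
  exact ((tendsto_logForm_sub_log hρ hσ).sub_const _).congr fun t ↦ by ring

variable {k ι : Type*} [Fintype k] [DecidableEq k] [Fintype ι] {K : ι → Matrix k m 𝕜}

lemma logForm_krausMap_sub_le (hK : ∑ a, (K a)ᴴ * K a = 1) (hρ : ρ.PosSemidef)
    (hσ : σ.PosSemidef) (h : SupportLE ρ σ) {t : ℝ} (ht : 0 ≤ t) :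
    logForm (posSemidef_krausMap K hρ).isHermitian (posSemidef_krausMap K hσ).isHermitian t -
        logForm (posSemidef_krausMap K hρ).isHermitian (posSemidef_krausMap K hσ).isHermitian 0 ≤
      logForm hρ.isHermitian hσ.isHermitian t - logForm hρ.isHermitian hσ.isHermitian 0 := by
  set F := logForm hρ.isHermitian hσ.isHermitian
  set F' := logForm (posSemidef_krausMap K hρ).isHermitian (posSemidef_krausMap K hσ).isHermitian
  have hderiv : ∀ s, 0 ≤ s → HasDerivAt (F - F') _ s := fun s hs ↦
    (hasDerivAt_logForm hρ hσ h hs).sub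
      (hasDerivAt_logForm (posSemidef_krausMap K hρ) (posSemidef_krausMap K hσ)
        (h.map_krausMap hσ K) hs)
  have hmono : MonotoneOn (F - F') (Set.Ici 0) := by
    refine monotoneOn_of_hasDerivWithinAt_nonneg (convex_Ici 0)
      (fun s hs ↦ (hderiv s hs).continuousAt.continuousWithinAt)
      (fun s hs ↦ (hderiv s (interior_subset hs)).hasDerivWithinAt) fun s hs ↦ ?_
    rw [interior_Ici] at hs
    exact sub_nonneg.2 (resolventForm_krausMap_le hK hρ hσ hs)
  have hzero : F 0 - F' 0 ≤ F t - F' t := hmono Set.self_mem_Ici ht ht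
  linarith

theorem relativeEntropy_krausMap_le (hK : ∑ a, (K a)ᴴ * K a = 1) (hρ : ρ.PosSemidef)
    (hσ : σ.PosSemidef) :
    relativeEntropy (krausMap K ρ) (krausMap K σ) ≤ relativeEntropy ρ σ := by
  by_cases h : SupportLE ρ σ
  · rw [relativeEntropy, relativeEntropy, if_pos h, if_pos (h.map_krausMap hσ K),
      EReal.coe_le_coe_iff]
    refine le_of_tendsto_of_tendsto (tendsto_logForm_sub_zero_sub_log
      (posSemidef_krausMap K hρ) (posSemidef_krausMap K hσ).isHermitian)
      (tendsto_logForm_sub_zero_sub_log hρ hσ.isHermitian) ?_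
    filter_upwards [eventually_ge_atTop 0] with t ht
    rw [trace_krausMap hK]
    exact sub_le_sub_right (logForm_krausMap_sub_le hK hρ hσ h ht) _
  · rw [relativeEntropy, relativeEntropy, if_neg h]
    exact le_top

end DataProcessing

section Channels

open scoped Kronecker

variable {𝕜 l : Type*} [RCLike 𝕜]

/-- The operator `1 ⊗ |v⟩`, which appends the vector `v` as a second tensor factor. -/
def tensorVec (m : Type*) [DecidableEq m] (v : l → 𝕜) : Matrix (m × l) m 𝕜 :=
  of fun x i ↦ (1 : Matrix m m 𝕜) x.1 i * v x.2

/-- The partial trace over the second tensor factor. -/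
def partialTrace {m : Type*} [Fintype l] (M : Matrix (m × l) (m × l) 𝕜) : Matrix m m 𝕜 :=
  of fun i i' ↦ ∑ j, M (i, j) (i', j)

variable {m : Type*} [Fintype m] [DecidableEq m]

lemma tensorVec_mul_mul_conjTranspose (v : l → 𝕜) (X : Matrix m m 𝕜) :
    tensorVec m v * X * (tensorVec m v)ᴴ = X ⊗ₖ vecMulVec v (star v) := by
  ext ⟨i, j⟩ ⟨i', j'⟩
  simp only [tensorVec, one_apply, ite_mul, one_mul, zero_mul, mul_apply, of_apply,
    Finset.sum_ite_eq, Finset.mem_univ, ↓reduceIte, conjTranspose_apply, RCLike.star_def,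
    apply_ite (starRingEnd 𝕜), map_zero, mul_ite, mul_zero, kroneckerMap_apply, vecMulVec_apply,
    Pi.star_apply]
  ring

variable [Fintype l]

lemma conjTranspose_tensorVec_mul_tensorVec (v w : l → 𝕜) :
    (tensorVec m v)ᴴ * tensorVec m w = (star v ⬝ᵥ w) • (1 : Matrix m m 𝕜) := by
  ext i i'
  simp [tensorVec, mul_apply, one_apply, dotProduct, Fintype.sum_prod_type,
    apply_ite (starRingEnd 𝕜), eq_comm]

variable [DecidableEq l]

lemma krausMap_conjTranspose_tensorVec (M : Matrix (m × l) (m × l) 𝕜) :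
    krausMap (fun j ↦ (tensorVec m (Pi.single j 1))ᴴ) M = partialTrace M := by
  ext i i'
  simp [krausMap, partialTrace, tensorVec, Matrix.sum_apply, mul_apply, one_apply, Pi.single_apply,
    Fintype.sum_prod_type, apply_ite (starRingEnd 𝕜)]

lemma sum_tensorVec_mul_conjTranspose :
    ∑ j : l, tensorVec m (Pi.single j (1 : 𝕜)) * (tensorVec m (Pi.single j (1 : 𝕜)))ᴴ =
      (1 : Matrix (m × l) (m × l) 𝕜) := by
  ext ⟨i, j⟩ ⟨i', j'⟩
  simp [tensorVec, Matrix.sum_apply, mul_apply, one_apply, Pi.single_apply,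
    apply_ite (starRingEnd 𝕜), and_comm (a := i = i'), ite_and]

variable {ρ σ : Matrix m m 𝕜}

theorem relativeEntropy_kronecker_le {τ : Matrix l l 𝕜} (hρ : ρ.PosSemidef) (hσ : σ.PosSemidef)
    (hτ : τ.PosSemidef) (hτ1 : τ.trace = 1) :
    relativeEntropy (ρ ⊗ₖ τ) (σ ⊗ₖ τ) ≤ relativeEntropy ρ σ := by
  obtain ⟨r, v, rfl⟩ := posSemidef_iff_eq_sum_vecMulVec.1 hτ
  have hkraus : ∀ X : Matrix m m 𝕜, X ⊗ₖ ∑ a, vecMulVec (v a) (star (v a)) =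
      krausMap (fun a ↦ tensorVec m (v a)) X := fun X ↦ by
    simp only [krausMap, tensorVec_mul_mul_conjTranspose]
    ext
    simp [Matrix.sum_apply, Finset.mul_sum]
  have htp : ∑ a, (tensorVec m (v a))ᴴ * tensorVec m (v a) = (1 : Matrix m m 𝕜) := by
    simp only [conjTranspose_tensorVec_mul_tensorVec]
    rw [← Finset.sum_smul]
    simp only [trace_sum, trace_vecMulVec] at hτ1
    simp only [dotProduct_comm (star _), hτ1, one_smul]
  rw [hkraus, hkraus]
  exact relativeEntropy_krausMap_le htp hρ hσ

theorem relativeEntropy_conj_isometry_le {k : Type*} [Fintype k] [DecidableEq k] {U : Matrix k m 𝕜}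
    (hU : Uᴴ * U = 1) (hρ : ρ.PosSemidef) (hσ : σ.PosSemidef) :
    relativeEntropy (U * ρ * Uᴴ) (U * σ * Uᴴ) ≤ relativeEntropy ρ σ := by
  simpa [krausMap] using relativeEntropy_krausMap_le (K := fun _ : Unit ↦ U) (by simpa) hρ hσ

theorem relativeEntropy_partialTrace_le {ρ σ : Matrix (m × l) (m × l) 𝕜} (hρ : ρ.PosSemidef)
    (hσ : σ.PosSemidef) :
    relativeEntropy (partialTrace ρ) (partialTrace σ) ≤ relativeEntropy ρ σ := by
  rw [← krausMap_conjTranspose_tensorVec, ← krausMap_conjTranspose_tensorVec]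
  refine relativeEntropy_krausMap_le ?_ hρ hσ
  simpa only [conjTranspose_conjTranspose] using sum_tensorVec_mul_conjTranspose

end Channels

section Convolution

open scoped Kronecker

variable {d n : ℕ} [Fact (Nat.Prime d)]

lemma matLog_eq_cfc (ρ : Mat d n) : matLog ρ = cfc Real.log ρ := by
  by_cases h : ρ.IsHermitian
  · rw [matLog, dif_pos h, cfc_eq_eigenvectorUnitary_mul h]
    rfl
  · rw [matLog, dif_neg h]
    exact (cfc_apply_of_not_predicate _ h).symm

lemma relEnt_eq_relativeEntropy (ρ σ : Mat d n) : relEnt ρ σ = relativeEntropy ρ σ := by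
  simp only [relEnt, matLog_eq_cfc]
  rfl

lemma conv_eq_partialTrace (g00 g01 g10 g11 : ZMod d) (ρ τ : Mat d n) :
    conv d n g00 g01 g10 g11 ρ τ = partialTrace
      (convU d n g00 g01 g10 g11 * (ρ ⊗ₖ τ) * (convU d n g00 g01 g10 g11)ᴴ) :=
  rfl

lemma conjTranspose_convU_mul_convU {g00 g01 g10 g11 : ZMod d} (hdet : g00 * g11 - g01 * g10 ≠ 0) :
    (convU d n g00 g01 g10 g11)ᴴ * convU d n g00 g01 g10 g11 = 1 := by
  set N := (g00 * g11 - g01 * g10)⁻¹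
  have hNdet : N * (g00 * g11 - g01 * g10) = 1 := inv_mul_cancel₀ hdet
  set f : QV d n × QV d n → QV d n × QV d n := fun x ↦
    (fun a ↦ N * g11 * x.1 a - N * g10 * x.2 a, fun a ↦ -(N * g01) * x.1 a + N * g00 * x.2 a)
  have hinj : f.Injective := by
    refine Function.LeftInverse.injective (g := fun y ↦
      (fun a ↦ g00 * y.1 a + g10 * y.2 a, fun a ↦ g01 * y.1 a + g11 * y.2 a)) fun x ↦ ?_
    refine Prod.ext (funext fun a ↦ ?_) (funext fun a ↦ ?_)
    · linear_combination x.1 a * hNdet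
    · linear_combination x.2 a * hNdet
  have hU : convU d n g00 g01 g10 g11 = (1 : Matrix _ _ ℂ).submatrix id f := rfl
  rw [hU, conjTranspose_submatrix, conjTranspose_one,
    ← submatrix_mul _ _ f id f Function.bijective_id, Matrix.mul_one, submatrix_one f hinj]

theorem statement12_general (d n : ℕ) [Fact (Nat.Prime d)] (g00 g01 g10 g11 : ZMod d)
    (hdet : g00 * g11 - g01 * g10 ≠ 0) (ρ σ τ : Mat d n) (hρ : ρ.PosSemidef) (hσ : σ.PosSemidef)
    (hτ : IsState d n τ) :
    relEnt (conv d n g00 g01 g10 g11 ρ τ) (conv d n g00 g01 g10 g11 σ τ) ≤ relEnt ρ σ := by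
  set U := convU d n g00 g01 g10 g11
  have hU : Uᴴ * U = 1 := conjTranspose_convU_mul_convU hdet
  have hρτ : (ρ ⊗ₖ τ).PosSemidef := hρ.kronecker hτ.1
  have hστ : (σ ⊗ₖ τ).PosSemidef := hσ.kronecker hτ.1
  rw [relEnt_eq_relativeEntropy, relEnt_eq_relativeEntropy, conv_eq_partialTrace,
    conv_eq_partialTrace]
  calc relativeEntropy (partialTrace (U * (ρ ⊗ₖ τ) * Uᴴ)) (partialTrace (U * (σ ⊗ₖ τ) * Uᴴ))
    _ ≤ relativeEntropy (U * (ρ ⊗ₖ τ) * Uᴴ) (U * (σ ⊗ₖ τ) * Uᴴ) :=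
      relativeEntropy_partialTrace_le (hρτ.mul_mul_conjTranspose_same U)
        (hστ.mul_mul_conjTranspose_same U)
    _ ≤ relativeEntropy (ρ ⊗ₖ τ) (σ ⊗ₖ τ) := relativeEntropy_conj_isometry_le hU hρτ hστ
    _ ≤ relativeEntropy ρ σ := relativeEntropy_kronecker_le hρ hσ hτ.1 hτ.2

end Convolution

/-- Monotonicity of the relative entropy under convolution:
`D(ρ ⊠ τ ‖ σ ⊠ τ) ≤ D(ρ ‖ σ)`. -/
theorem statement12 (d n : ℕ) [Fact (Nat.Prime d)] (hd : Odd d) (hn : 1 ≤ n)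
    (g00 g01 g10 g11 : ZMod d) (h00 : g00 ≠ 0) (h01 : g01 ≠ 0)
    (h10 : g10 ≠ 0) (h11 : g11 ≠ 0) (hdet : g00 * g11 - g01 * g10 ≠ 0)
    (ρ σ τ : Mat d n) (hρ : IsState d n ρ) (hσ : IsState d n σ) (hτ : IsState d n τ) :
    relEnt (conv d n g00 g01 g10 g11 ρ τ) (conv d n g00 g01 g10 g11 σ τ) ≤
      relEnt ρ σ :=
  statement12_general d n g00 g01 g10 g11 hdet ρ σ τ hρ.1 hσ.1 hτ

end PaperQI
end

section
/- Convolution increases Rényi entropy: for all n-qudit states ρ, σ and every α ∈ [0, +∞], H_α(ρ ⊠ σ) ≥ max{H_α(ρ), H_α(σ)}. -/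
open scoped BigOperators ComplexOrder Classical ENNReal
open Matrix

namespace PaperQI

/-! Fix `σ`. The map `ρ ↦ ρ ⊠ σ` is doubly stochastic, i.e. positive, unital and trace preserving:
since `U` permutes the computational basis, the identity is mapped to a diagonal matrix because
`i ↦ g₀₀ i` is injective, and its diagonal entries equal `Tr σ` because `j ↦ g₁₁ j` is bijective.
Conjugated by the unitaries that diagonalize `ρ` and `ρ ⊠ σ`, the map sends the diagonal matrix of
eigenvalues of `ρ` to that of `ρ ⊠ σ`, so its restriction to diagonal matrices exhibits the second
spectrum as the image of the first under a doubly stochastic matrix, and by Jensen's inequality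
classical Rényi entropies increase under such matrices. Swapping the columns of `G` exchanges the
two factors, which gives the bound by the entropy of `σ`. -/

/-! ### Doubly stochastic matrices and the classical Rényi entropy -/

section DoublyStochastic

variable {ι R : Type*} [Fintype ι] [DecidableEq ι]

theorem mulVec_mem_stdSimplex [Semiring R] [PartialOrder R] [IsOrderedRing R] {D : Matrix ι ι R}
    (hD : D ∈ colStochastic R ι) {p : ι → R} (hp : p ∈ stdSimplex R ι) :
    D *ᵥ p ∈ stdSimplex R ι :=
  ⟨nonneg_mulVec_of_mem_colStochastic hD hp.1,
    (sum_mulVec_of_mem_colStochastic hD).trans hp.2⟩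

variable [Field R] [LinearOrder R] [IsStrictOrderedRing R] {D : Matrix ι ι R} {x : ι → R}
  {s : Set R} {f : R → R}

theorem sum_map_mulVec_le_of_convexOn (hD : D ∈ doublyStochastic R ι) (hf : ConvexOn R s f)
    (hx : ∀ a, x a ∈ s) : ∑ c, f ((D *ᵥ x) c) ≤ ∑ a, f (x a) := by
  have jensen (c : ι) : f ((D *ᵥ x) c) ≤ ∑ a, D c a * f (x a) :=
    hf.map_sum_le (fun _ _ ↦ nonneg_of_mem_doublyStochastic hD)
      (sum_row_of_mem_doublyStochastic hD c) (fun a _ ↦ hx a)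
  calc ∑ c, f ((D *ᵥ x) c) ≤ ∑ c, ∑ a, D c a * f (x a) := Finset.sum_le_sum fun c _ ↦ jensen c
    _ = ∑ a, f (x a) := sum_mulVec_of_mem_doublyStochastic (x := f ∘ x) hD

theorem sum_map_le_mulVec_of_concaveOn (hD : D ∈ doublyStochastic R ι) (hf : ConcaveOn R s f)
    (hx : ∀ a, x a ∈ s) : ∑ a, f (x a) ≤ ∑ c, f ((D *ᵥ x) c) := by
  simpa only [Pi.neg_apply, Finset.sum_neg_distrib, neg_le_neg_iff]
    using sum_map_mulVec_le_of_convexOn hD hf.neg hx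

theorem card_support_le_mulVec (hD : D ∈ doublyStochastic R ι) (hx : ∀ a, 0 ≤ x a) :
    (Finset.univ.filter fun a ↦ x a ≠ 0).card ≤
      (Finset.univ.filter fun c ↦ (D *ᵥ x) c ≠ 0).card := by
  set S := Finset.univ.filter fun a ↦ x a ≠ 0
  set T := Finset.univ.filter fun c ↦ (D *ᵥ x) c ≠ 0
  have hD0 : ∀ c a, 0 ≤ D c a := fun _ _ ↦ nonneg_of_mem_doublyStochastic hD
  have entry_eq_zero : ∀ a ∈ S, ∀ c ∉ T, D c a = 0 := by
    intro a ha c hc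
    have hxa : x a ≠ 0 := by simpa [S] using ha
    have hDx : (D *ᵥ x) c = 0 := by simpa [T] using hc
    have hsum : ∑ a, D c a * x a = 0 := hDx
    rw [Finset.sum_eq_zero_iff_of_nonneg fun a _ ↦ mul_nonneg (hD0 c a) (hx a)] at hsum
    exact (mul_eq_zero.mp (hsum a (Finset.mem_univ a))).resolve_right hxa
  have card_le : (S.card : R) ≤ T.card := by
    calc (S.card : R) = ∑ a ∈ S, ∑ c, D c a := by
          simp only [sum_col_of_mem_doublyStochastic hD, Finset.sum_const, nsmul_one]
      _ = ∑ a ∈ S, ∑ c ∈ T, D c a := Finset.sum_congr rfl fun a ha ↦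
          (Finset.sum_subset (Finset.subset_univ T) fun c _ ↦ entry_eq_zero a ha c).symm
      _ = ∑ c ∈ T, ∑ a ∈ S, D c a := Finset.sum_comm
      _ ≤ ∑ c ∈ T, ∑ a, D c a := Finset.sum_le_sum fun c _ ↦
          Finset.sum_le_sum_of_subset_of_nonneg (Finset.subset_univ S) fun a _ _ ↦ hD0 c a
      _ = T.card := by
          simp only [sum_row_of_mem_doublyStochastic hD, Finset.sum_const, nsmul_one]
  exact_mod_cast card_le

theorem iSup_mulVec_le [Nonempty ι] {D : Matrix ι ι ℝ} (hD : D ∈ rowStochastic ℝ ι) (x : ι → ℝ) :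
    ⨆ c, (D *ᵥ x) c ≤ ⨆ a, x a := by
  refine ciSup_le fun c ↦ ?_
  calc ∑ a, D c a * x a ≤ ∑ a, D c a * ⨆ b, x b := by
        gcongr with a
        · exact nonneg_of_mem_rowStochastic hD
        · exact le_ciSup (Set.finite_range x).bddAbove a
    _ = ⨆ a, x a := by rw [← Finset.sum_mul, sum_row_of_mem_rowStochastic hD, one_mul]

end DoublyStochastic

section RenyiEntropy

variable {ι : Type*} [Fintype ι] {p : ι → ℝ}

/-- The Rényi entropy of order `α ∈ [0, ∞]` of a probability vector, with the Hartley, Shannon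
and min-entropies at `α = 0, 1, ∞`. -/
noncomputable def renyiEntropy (α : ℝ≥0∞) (p : ι → ℝ) : ℝ :=
  if α = 0 then Real.log (Finset.univ.filter fun i ↦ p i ≠ 0).card
  else if α = 1 then ∑ i, Real.negMulLog (p i)
  else if α = ⊤ then -Real.log (⨆ i, p i)
  else (1 - α.toReal)⁻¹ * Real.log (∑ i, p i ^ α.toReal)

theorem exists_pos_of_mem_stdSimplex (hp : p ∈ stdSimplex ℝ ι) : ∃ i, 0 < p i := by
  have hsum : 0 < ∑ i, p i := hp.2 ▸ one_pos
  simpa using (Finset.sum_pos_iff_of_nonneg fun i _ ↦ hp.1 i).mp hsum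

theorem sum_rpow_pos (hp : p ∈ stdSimplex ℝ ι) (t : ℝ) : 0 < ∑ i, p i ^ t :=
  have ⟨i, hi⟩ := exists_pos_of_mem_stdSimplex hp
  Finset.sum_pos' (fun j _ ↦ Real.rpow_nonneg (hp.1 j) t)
    ⟨i, Finset.mem_univ i, Real.rpow_pos_of_pos hi t⟩

variable [DecidableEq ι] {D : Matrix ι ι ℝ}

theorem inv_one_sub_mul_log_sum_rpow_le_mulVec (hD : D ∈ doublyStochastic ℝ ι)
    (hp : p ∈ stdSimplex ℝ ι) {t : ℝ} (ht : 0 ≤ t) :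
    (1 - t)⁻¹ * Real.log (∑ i, p i ^ t) ≤ (1 - t)⁻¹ * Real.log (∑ i, (D *ᵥ p) i ^ t) := by
  have hq := mulVec_mem_stdSimplex
    (mem_doublyStochastic_iff_mem_rowStochastic_and_mem_colStochastic.mp hD).2 hp
  rcases le_total t 1 with ht1 | ht1
  · refine mul_le_mul_of_nonneg_left (Real.log_le_log (sum_rpow_pos hp t) ?_)
      (inv_nonneg.mpr (sub_nonneg.mpr ht1))
    exact sum_map_le_mulVec_of_concaveOn hD (Real.concaveOn_rpow ht ht1) hp.1
  · refine mul_le_mul_of_nonpos_left (Real.log_le_log (sum_rpow_pos hq t) ?_)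
      (inv_nonpos.mpr (sub_nonpos.mpr ht1))
    exact sum_map_mulVec_le_of_convexOn hD (convexOn_rpow ht1) hp.1

theorem renyiEntropy_le_mulVec (hD : D ∈ doublyStochastic ℝ ι) (hp : p ∈ stdSimplex ℝ ι)
    (α : ℝ≥0∞) : renyiEntropy α p ≤ renyiEntropy α (D *ᵥ p) := by
  have ⟨hrow, hcol⟩ := mem_doublyStochastic_iff_mem_rowStochastic_and_mem_colStochastic.mp hD
  obtain ⟨i, hi⟩ := exists_pos_of_mem_stdSimplex hp
  unfold renyiEntropy
  split_ifs
  · have card_pos : 0 < (Finset.univ.filter fun i ↦ p i ≠ 0).card :=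
      Finset.card_pos.mpr ⟨i, by simpa using hi.ne'⟩
    exact Real.log_le_log (Nat.cast_pos.mpr card_pos)
      (Nat.cast_le.mpr (card_support_le_mulVec hD hp.1))
  · exact sum_map_le_mulVec_of_concaveOn hD Real.concaveOn_negMulLog hp.1
  · have : Nonempty ι := ⟨i⟩
    obtain ⟨j, hj⟩ := exists_pos_of_mem_stdSimplex (mulVec_mem_stdSimplex hcol hp)
    have iSup_pos : 0 < ⨆ c, (D *ᵥ p) c := hj.trans_le (le_ciSup (Set.finite_range _).bddAbove j)
    exact neg_le_neg (Real.log_le_log iSup_pos (iSup_mulVec_le hrow p))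
  · exact inv_one_sub_mul_log_sum_rpow_le_mulVec hD hp ENNReal.toReal_nonneg

end RenyiEntropy

/-! ### Doubly stochastic maps and spectra -/

section DoublyStochasticMap

variable {𝕜 ι : Type*} [RCLike 𝕜] [Fintype ι] [DecidableEq ι]
  {Φ Ψ : Matrix ι ι 𝕜 →ₗ[𝕜] Matrix ι ι 𝕜}

/-- A doubly stochastic (positive, unital and trace-preserving) linear map on matrices, the
quantum analogue of a doubly stochastic matrix. Complete positivity is not required. -/
structure IsDoublyStochasticMap (Φ : Matrix ι ι 𝕜 →ₗ[𝕜] Matrix ι ι 𝕜) : Prop where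
  posSemidef_map : ∀ {A : Matrix ι ι 𝕜}, A.PosSemidef → (Φ A).PosSemidef
  map_one : Φ 1 = 1
  trace_map : ∀ A : Matrix ι ι 𝕜, (Φ A).trace = A.trace

theorem IsDoublyStochasticMap.comp (hΨ : IsDoublyStochasticMap Ψ) (hΦ : IsDoublyStochasticMap Φ) :
    IsDoublyStochasticMap (Ψ ∘ₗ Φ) where
  posSemidef_map hA := hΨ.posSemidef_map (hΦ.posSemidef_map hA)
  map_one := by rw [LinearMap.comp_apply, hΦ.map_one, hΨ.map_one]
  trace_map A := (hΨ.trace_map _).trans (hΦ.trace_map A)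

theorem isDoublyStochasticMap_conjStarAlgAut (U : unitaryGroup ι 𝕜) :
    IsDoublyStochasticMap
      (Unitary.conjStarAlgAut 𝕜 (Matrix ι ι 𝕜) U).toAlgEquiv.toLinearMap where
  posSemidef_map hA := hA.mul_mul_conjTranspose_same (U : Matrix ι ι 𝕜)
  map_one := map_one (Unitary.conjStarAlgAut 𝕜 (Matrix ι ι 𝕜) U)
  trace_map A := by
    change ((U : Matrix ι ι 𝕜) * A * star (U : Matrix ι ι 𝕜)).trace = A.trace
    rw [trace_mul_cycle, Unitary.coe_star_mul_self, one_mul]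

/-- The matrix of the action of `Φ` on diagonal matrices followed by restriction to the diagonal:
its entries are the transition probabilities `⟨c|Φ(|a⟩⟨a|)|c⟩`. -/
def transitionMatrix (Φ : Matrix ι ι 𝕜 →ₗ[𝕜] Matrix ι ι 𝕜) : Matrix ι ι ℝ :=
  Matrix.of fun c a ↦ RCLike.re (Φ (single a a 1) c c)

theorem transitionMatrix_mulVec (Φ : Matrix ι ι 𝕜 →ₗ[𝕜] Matrix ι ι 𝕜) (x : ι → ℝ) (c : ι) :
    (transitionMatrix Φ *ᵥ x) c = RCLike.re (Φ (diagonal (RCLike.ofReal ∘ x)) c c) := by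
  have diagonal_eq : diagonal (RCLike.ofReal ∘ x : ι → 𝕜) =
      ∑ a, (x a : 𝕜) • single a a (1 : 𝕜) := by
    simp only [smul_single, smul_eq_mul, mul_one]
    exact (sum_single_eq_diagonal _).symm
  rw [diagonal_eq, map_sum, Matrix.sum_apply, map_sum]
  simp only [transitionMatrix, mulVec, dotProduct, of_apply, map_smul, Matrix.smul_apply,
    smul_eq_mul, RCLike.re_ofReal_mul, mul_comm]

theorem IsDoublyStochasticMap.transitionMatrix_mem (hΦ : IsDoublyStochasticMap Φ) :
    transitionMatrix Φ ∈ doublyStochastic ℝ ι := by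
  refine mem_doublyStochastic_iff_sum.mpr ⟨fun c a ↦ ?_, fun c ↦ ?_, fun a ↦ ?_⟩
  · have single_posSemidef : (single a a (1 : 𝕜)).PosSemidef := by
      rw [← diagonal_single]
      exact PosSemidef.diagonal (Pi.single_nonneg.mpr zero_le_one)
    exact (RCLike.nonneg_iff.mp (hΦ.posSemidef_map single_posSemidef).diag_nonneg).1
  · have row_sum := transitionMatrix_mulVec Φ 1 c
    simpa [mulVec, dotProduct, Function.comp_def, hΦ.map_one] using row_sum
  · calc ∑ c, transitionMatrix Φ c a = RCLike.re (Φ (single a a 1)).trace :=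
          (map_sum RCLike.re _ _).symm
      _ = 1 := by rw [hΦ.trace_map, trace_single_eq_same, RCLike.one_re]

theorem IsDoublyStochasticMap.exists_eigenvalues_eq_mulVec (hΦ : IsDoublyStochasticMap Φ)
    {A : Matrix ι ι 𝕜} (hA : A.IsHermitian) (hΦA : (Φ A).IsHermitian) :
    ∃ D ∈ doublyStochastic ℝ ι, hΦA.eigenvalues = D *ᵥ hA.eigenvalues := by
  let conj (U : unitaryGroup ι 𝕜) :=
    (Unitary.conjStarAlgAut 𝕜 (Matrix ι ι 𝕜) U).toAlgEquiv.toLinearMap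
  let Ψ := conj (star hΦA.eigenvectorUnitary) ∘ₗ Φ ∘ₗ conj hA.eigenvectorUnitary
  have hΨ : IsDoublyStochasticMap Ψ :=
    (isDoublyStochasticMap_conjStarAlgAut _).comp
      (hΦ.comp (isDoublyStochasticMap_conjStarAlgAut _))
  have map_eigenvalues : Ψ (diagonal (RCLike.ofReal ∘ hA.eigenvalues)) =
      diagonal (RCLike.ofReal ∘ hΦA.eigenvalues) := by
    rw [← hΦA.conjStarAlgAut_star_eigenvectorUnitary]
    exact congrArg (conj (star hΦA.eigenvectorUnitary) ∘ₗ Φ) hA.spectral_theorem.symm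
  refine ⟨transitionMatrix Ψ, hΨ.transitionMatrix_mem, funext fun c ↦ ?_⟩
  rw [transitionMatrix_mulVec, map_eigenvalues, diagonal_apply_eq, Function.comp_apply,
    RCLike.ofReal_re]

theorem eigenvalues_mem_stdSimplex {A : Matrix ι ι 𝕜} (hA : A.PosSemidef) (htr : A.trace = 1) :
    hA.isHermitian.eigenvalues ∈ stdSimplex ℝ ι := by
  refine ⟨hA.eigenvalues_nonneg, ?_⟩
  have hsum := hA.isHermitian.trace_eq_sum_eigenvalues
  rw [htr] at hsum
  exact_mod_cast hsum.symm

end DoublyStochasticMap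

section States

variable {d n : ℕ} [Fact (Nat.Prime d)] {ρ : Mat d n}

theorem renyiEnt_eq_renyiEntropy_eigenvalues (hρ : ρ.IsHermitian) (α : ℝ≥0∞) :
    renyiEnt α ρ = renyiEntropy α hρ.eigenvalues := by
  simp only [renyiEnt, renyiEntropy, dif_pos hρ, hρ.rank_eq_card_non_zero_eigs,
    Fintype.card_subtype, Real.negMulLog, neg_mul, Finset.sum_neg_distrib]

theorem IsDoublyStochasticMap.renyiEnt_le {Φ : Mat d n →ₗ[ℂ] Mat d n}
    (hΦ : IsDoublyStochasticMap Φ) (hρ : IsState d n ρ) (α : ℝ≥0∞) :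
    renyiEnt α ρ ≤ renyiEnt α (Φ ρ) := by
  have hΦρ := (hΦ.posSemidef_map hρ.1).isHermitian
  obtain ⟨D, hD, spectrum_eq⟩ := hΦ.exists_eigenvalues_eq_mulVec hρ.1.isHermitian hΦρ
  rw [renyiEnt_eq_renyiEntropy_eigenvalues hρ.1.isHermitian,
    renyiEnt_eq_renyiEntropy_eigenvalues hΦρ, spectrum_eq]
  exact renyiEntropy_le_mulVec hD (eigenvalues_mem_stdSimplex hρ.1 hρ.2) α

end States

/-! ### The convolution -/

section Convolution

open scoped Kronecker

variable {d n : ℕ}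

theorem kron_eq_kronecker (ρ σ : Mat d n) : kron ρ σ = ρ ⊗ₖ σ := rfl

variable [Fact (Nat.Prime d)]

theorem ptrB_eq_sum_submatrix (M : Matrix (QV d n × QV d n) (QV d n × QV d n) ℂ) :
    ptrB M = ∑ j, M.submatrix (·, j) (·, j) := by
  ext i i'
  simp only [ptrB, of_apply, Matrix.sum_apply, submatrix_apply]

theorem trace_ptrB (M : Matrix (QV d n × QV d n) (QV d n × QV d n) ℂ) :
    (ptrB M).trace = M.trace :=
  (Fintype.sum_prod_type fun ij ↦ M ij ij).symm

variable {g00 g01 g10 g11 : ZMod d}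

theorem conv_posSemidef {ρ σ : Mat d n} (hρ : ρ.PosSemidef) (hσ : σ.PosSemidef) :
    (conv d n g00 g01 g10 g11 ρ σ).PosSemidef := by
  rw [conv, ptrB_eq_sum_submatrix]
  exact posSemidef_sum _ fun j _ ↦
    ((hρ.kronecker hσ).mul_mul_conjTranspose_same _).submatrix _

/-- Convolution with a fixed second factor, as a linear map. -/
noncomputable def convRight (g00 g01 g10 g11 : ZMod d) (σ : Mat d n) : Mat d n →ₗ[ℂ] Mat d n where
  toFun ρ := conv d n g00 g01 g10 g11 ρ σ
  map_add' ρ ρ' := by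
    simp only [conv, kron_eq_kronecker, add_kronecker, Matrix.mul_add, Matrix.add_mul,
      ptrB_eq_sum_submatrix, submatrix_add, Pi.add_apply, Finset.sum_add_distrib]
  map_smul' c ρ := by
    simp only [conv, kron_eq_kronecker, smul_kronecker, Matrix.mul_smul, Matrix.smul_mul,
      ptrB_eq_sum_submatrix, submatrix_smul, Pi.smul_apply, Finset.smul_sum, RingHom.id_apply]

/-- The inverse of the permutation of the computational basis performed by `convU`, namely
`(k, l) ↦ (g₀₀ k + g₁₀ l, g₀₁ k + g₁₁ l)`. -/
def convPerm (n : ℕ) (hdet : g00 * g11 - g01 * g10 ≠ 0) : Equiv.Perm (QV d n × QV d n) where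
  toFun kl := (g00 • kl.1 + g10 • kl.2, g01 • kl.1 + g11 • kl.2)
  invFun ij := ((g00 * g11 - g01 * g10)⁻¹ • (g11 • ij.1 - g10 • ij.2),
    (g00 * g11 - g01 * g10)⁻¹ • (g00 • ij.2 - g01 • ij.1))
  left_inv kl := by
    ext a <;> simp only [Pi.smul_apply, Pi.add_apply, Pi.sub_apply, smul_eq_mul] <;>
      field_simp <;> ring
  right_inv ij := by
    ext a <;> simp only [Pi.smul_apply, Pi.add_apply, Pi.sub_apply, smul_eq_mul] <;>
      field_simp <;> ring

theorem convU_eq_permMatrix (hdet : g00 * g11 - g01 * g10 ≠ 0) :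
    convU d n g00 g01 g10 g11 = (convPerm n hdet).permMatrix ℂ := by
  ext kl ij
  have image_eq : ((fun a ↦ (g00 * g11 - g01 * g10)⁻¹ * g11 * ij.1 a
        - (g00 * g11 - g01 * g10)⁻¹ * g10 * ij.2 a : QV d n),
      (fun a ↦ -((g00 * g11 - g01 * g10)⁻¹ * g01) * ij.1 a
        + (g00 * g11 - g01 * g10)⁻¹ * g00 * ij.2 a : QV d n)) = (convPerm n hdet).symm ij := by
    ext a <;> simp only [convPerm, Equiv.coe_fn_symm_mk, Pi.smul_apply, Pi.sub_apply,
      smul_eq_mul] <;> ring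
  simp only [convU, of_apply, image_eq, Equiv.eq_symm_apply, PEquiv.toMatrix_apply,
    Equiv.toPEquiv_apply, Option.mem_some_iff]

theorem conv_eq_ptrB_submatrix (hdet : g00 * g11 - g01 * g10 ≠ 0) (ρ σ : Mat d n) :
    conv d n g00 g01 g10 g11 ρ σ =
      ptrB ((kron ρ σ).submatrix (convPerm n hdet) (convPerm n hdet)) := by
  rw [conv, convU_eq_permMatrix hdet, conjTranspose_permMatrix, PEquiv.toMatrix_toPEquiv_mul,
    PEquiv.mul_toMatrix_toPEquiv]
  rfl

theorem conv_apply (hdet : g00 * g11 - g01 * g10 ≠ 0) (ρ σ : Mat d n) (k k' : QV d n) :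
    conv d n g00 g01 g10 g11 ρ σ k k' =
      ∑ l, ρ (g00 • k + g10 • l) (g00 • k' + g10 • l) *
        σ (g01 • k + g11 • l) (g01 • k' + g11 • l) := by
  rw [conv_eq_ptrB_submatrix hdet]
  rfl

theorem conv_swap_columns (hdet : g00 * g11 - g01 * g10 ≠ 0) (ρ σ : Mat d n) :
    conv d n g01 g00 g11 g10 σ ρ = conv d n g00 g01 g10 g11 ρ σ := by
  have hdet' : g01 * g10 - g00 * g11 ≠ 0 := by rwa [← neg_sub, neg_ne_zero]
  ext k k'
  simp only [conv_apply hdet, conv_apply hdet', mul_comm]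

theorem trace_conv (hdet : g00 * g11 - g01 * g10 ≠ 0) (ρ σ : Mat d n) :
    (conv d n g00 g01 g10 g11 ρ σ).trace = ρ.trace * σ.trace := by
  rw [conv_eq_ptrB_submatrix hdet, trace_ptrB, kron_eq_kronecker, ← trace_kronecker]
  exact Equiv.sum_comp (convPerm n hdet) fun x ↦ (ρ ⊗ₖ σ) x x

theorem sum_map_add_smul {K V M : Type*} [GroupWithZero K] [AddGroup V] [MulAction K V]
    [Fintype V] [AddCommMonoid M] {g : K} (hg : g ≠ 0) (v : V) (f : V → M) :
    ∑ x, f (v + g • x) = ∑ x, f x :=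
  ((MulAction.toPerm (Units.mk0 g hg)).trans (Equiv.addLeft v)).sum_comp f

theorem conv_one_left (h00 : g00 ≠ 0) (h11 : g11 ≠ 0) (hdet : g00 * g11 - g01 * g10 ≠ 0)
    {σ : Mat d n} (hσ : σ.trace = 1) : conv d n g00 g01 g10 g11 1 σ = 1 := by
  ext k k'
  simp only [conv_apply hdet, one_apply, add_left_inj, smul_right_inj h00]
  split_ifs with hk
  · subst hk
    simp only [one_mul]
    exact (sum_map_add_smul h11 (g01 • k) fun x ↦ σ x x).trans hσ
  · simp only [zero_mul, Finset.sum_const_zero]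

theorem isDoublyStochasticMap_convRight (h00 : g00 ≠ 0) (h11 : g11 ≠ 0)
    (hdet : g00 * g11 - g01 * g10 ≠ 0) {σ : Mat d n} (hσ : IsState d n σ) :
    IsDoublyStochasticMap (convRight g00 g01 g10 g11 σ) where
  posSemidef_map hA := conv_posSemidef hA hσ.1
  map_one := conv_one_left h00 h11 hdet hσ.2
  trace_map A := (trace_conv hdet A σ).trans (by rw [hσ.2, mul_one])

theorem renyiEnt_le_renyiEnt_conv_left (h00 : g00 ≠ 0) (h11 : g11 ≠ 0)
    (hdet : g00 * g11 - g01 * g10 ≠ 0) {ρ σ : Mat d n} (hρ : IsState d n ρ)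
    (hσ : IsState d n σ) (α : ℝ≥0∞) :
    renyiEnt α ρ ≤ renyiEnt α (conv d n g00 g01 g10 g11 ρ σ) :=
  (isDoublyStochasticMap_convRight h00 h11 hdet hσ).renyiEnt_le hρ α

theorem renyiEnt_le_renyiEnt_conv_right (h01 : g01 ≠ 0) (h10 : g10 ≠ 0)
    (hdet : g00 * g11 - g01 * g10 ≠ 0) {ρ σ : Mat d n} (hρ : IsState d n ρ)
    (hσ : IsState d n σ) (α : ℝ≥0∞) :
    renyiEnt α σ ≤ renyiEnt α (conv d n g00 g01 g10 g11 ρ σ) := by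
  have hdet' : g01 * g10 - g00 * g11 ≠ 0 := by rwa [← neg_sub, neg_ne_zero]
  rw [← conv_swap_columns hdet]
  exact renyiEnt_le_renyiEnt_conv_left h01 h10 hdet' hσ hρ α

end Convolution

/-- Convolution increases the Rényi entropy: for all states `ρ, σ`
and every `α ∈ [0,∞]`, `H_α(ρ ⊠ σ) ≥ max{H_α(ρ), H_α(σ)}`. -/
theorem statement13 (d n : ℕ) [Fact (Nat.Prime d)] (hd : Odd d) (hn : 1 ≤ n)
    (g00 g01 g10 g11 : ZMod d) (h00 : g00 ≠ 0) (h01 : g01 ≠ 0)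
    (h10 : g10 ≠ 0) (h11 : g11 ≠ 0) (hdet : g00 * g11 - g01 * g10 ≠ 0)
    (ρ σ : Mat d n) (hρ : IsState d n ρ) (hσ : IsState d n σ) (α : ℝ≥0∞) :
    max (renyiEnt α ρ) (renyiEnt α σ) ≤ renyiEnt α (conv d n g00 g01 g10 g11 ρ σ) :=
  max_le (renyiEnt_le_renyiEnt_conv_left h00 h11 hdet hρ hσ α)
    (renyiEnt_le_renyiEnt_conv_right h01 h10 hdet hρ hσ α)

end PaperQI
end
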